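/- Let Ω ⊂ ℝ^d be open, bounded, and convex with smooth boundary. Let L u = −∇·(ε∇u) + κ² u where ε^{ij}(x) = ε(x)δ_{ij} is scalar with ε ∈ W^{1,∞}(Ω), Re ε(x) ≥ θ > 0 for all x ∈ Ω, and κ² ∈ L^∞(Ω; ℂ) with Re κ²(x) ≥ −μ, μ/θ < λ₁. Then the elliptic regularity constant C_H satisfies C_H ≤ (λ₁^{−1} ⟨λ₁^{1/3}⟩³ / θ) · (1 + (‖κ²‖_{L^∞} + d^{1/2} max_{1≤i≤d} ‖∂_i ε‖_{L^∞} λ₁^{1/2}) / (θλ₁ − μ)). -/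

import Mathlib

open MeasureTheory Set Filter
open scoped ENNReal NNReal Topology BigOperators

noncomputable section

/-- Euclidean space ℝ^d. -/
abbrev Euc (d : ℕ) := EuclideanSpace ℝ (Fin d)

/-- Smooth compactly supported test functions supported inside Ω. -/
def IsTestFun {d : ℕ} (Ω : Set (Euc d)) (φ : Euc d → ℂ) : Prop :=
  ContDiff ℝ (⊤ : ℕ∞) φ ∧ HasCompactSupport φ ∧ tsupport φ ⊆ Ω

/-- The i-th partial derivative of a (differentiable) function. -/
def pd {d : ℕ} (i : Fin d) (φ : Euc d → ℂ) (x : Euc d) : ℂ :=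
  fderiv ℝ φ x (EuclideanSpace.single i (1 : ℝ))

/-- `v` is the i-th weak partial derivative of `u` on Ω. -/
def IsWeakDeriv {d : ℕ} (Ω : Set (Euc d)) (i : Fin d) (u v : Euc d → ℂ) : Prop :=
  ∀ φ : Euc d → ℂ, IsTestFun Ω φ →
    ∫ x in Ω, u x * pd i φ x = - ∫ x in Ω, v x * φ x

/-- Membership in L²(Ω). -/
def MemL2 {d : ℕ} (Ω : Set (Euc d)) (u : Euc d → ℂ) : Prop :=
  MemLp u 2 (volume.restrict Ω)

/-- The L²(Ω) norm. -/
def L2N {d : ℕ} (Ω : Set (Euc d)) (u : Euc d → ℂ) : ℝ :=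
  (eLpNorm u 2 (volume.restrict Ω)).toReal

/-- The L^∞(Ω) norm. -/
def LinfN {d : ℕ} (Ω : Set (Euc d)) (u : Euc d → ℂ) : ℝ :=
  (eLpNorm u ⊤ (volume.restrict Ω)).toReal

/-- A bundled Sobolev function of integer order k on Ω : the function together with
all of its iterated weak partial derivatives up to order k, all belonging to L²(Ω).
`D j v` is the iterated weak derivative ∂_{v 0} ∂_{v 1} ⋯ ∂_{v (j-1)} u. -/
structure SobFun (d : ℕ) (Ω : Set (Euc d)) (k : ℕ) where
  D : (j : ℕ) → (Fin j → Fin d) → Euc d → ℂ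
  mem : ∀ j, j ≤ k → ∀ v : Fin j → Fin d, MemL2 Ω (D j v)
  weak : ∀ j, j < k → ∀ v : Fin j → Fin d, ∀ i : Fin d,
    IsWeakDeriv Ω i (D j v) (D (j+1) (Fin.cons i v))

/-- The underlying function of a bundled Sobolev function. -/
def SobFun.u {d : ℕ} {Ω : Set (Euc d)} {k : ℕ} (U : SobFun d Ω k) : Euc d → ℂ :=
  U.D 0 (fun i => i.elim0)

/-- First-order weak partial derivatives of a bundled Sobolev function. -/
def SobFun.d1 {d : ℕ} {Ω : Set (Euc d)} {k : ℕ} (U : SobFun d Ω k) (i : Fin d) :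
    Euc d → ℂ :=
  U.D 1 (fun _ => i)

/-- Forgetting the top-order derivatives of a bundled Sobolev function. -/
def SobFun.lower {d : ℕ} {Ω : Set (Euc d)} {k : ℕ} (U : SobFun d Ω (k+1)) :
    SobFun d Ω k :=
  ⟨U.D, fun j hj v => U.mem j (Nat.le_succ_of_le hj) v,
    fun j hj v i => U.weak j (Nat.lt_succ_of_lt hj) v i⟩

/-- Squared Gagliardo seminorm, as an extended nonnegative real. -/
def gagliardoE {d : ℕ} (Ω : Set (Euc d)) (s' : ℝ) (v : Euc d → ℂ) : ℝ≥0∞ :=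
  ∫⁻ x in Ω, ∫⁻ y in Ω,
    ((‖v x - v y‖₊ : ℝ≥0∞) ^ (2 : ℕ)) / ((‖x - y‖₊ : ℝ≥0∞) ^ ((d : ℝ) + 2 * s'))

/-- Gagliardo seminorm with differentiability parameter s' ∈ (0,1). -/
def gagliardo {d : ℕ} (Ω : Set (Euc d)) (s' : ℝ) (v : Euc d → ℂ) : ℝ :=
  ((gagliardoE Ω s' v) ^ ((1 : ℝ)/2)).toReal

/-- Integer-order Sobolev norm ‖·‖_{H^k(Ω)}. -/
def SobNormInt {d : ℕ} {Ω : Set (Euc d)} {k : ℕ} (U : SobFun d Ω k) : ℝ :=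
  Real.sqrt (∑ j ∈ Finset.range (k+1), ∑ v : Fin j → Fin d, (L2N Ω (U.D j v))^2)

/-- Sobolev norm ‖·‖_{H^s(Ω)} for k ≤ s < k+1 : the integer part plus, when s > k,
the Gagliardo seminorms of the top-order derivatives. -/
def SobNormS {d : ℕ} {Ω : Set (Euc d)} {k : ℕ} (s : ℝ) (U : SobFun d Ω k) : ℝ :=
  Real.sqrt ((∑ j ∈ Finset.range (k+1), ∑ v : Fin j → Fin d, (L2N Ω (U.D j v))^2)
    + if (k : ℝ) < s then
        ∑ v : Fin k → Fin d, (gagliardo Ω (s - k) (U.D k v))^2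
      else 0)

/-- Finiteness of the fractional part of the H^s norm (membership in H^s). -/
def SobFinS {d : ℕ} {Ω : Set (Euc d)} {k : ℕ} (s : ℝ) (U : SobFun d Ω k) : Prop :=
  (k : ℝ) < s → ∀ v : Fin k → Fin d, gagliardoE Ω (s - k) (U.D k v) < ⊤

/-- H^s distance between two bundled Sobolev functions, k ≤ s < k+1. -/
def SobDistS {d : ℕ} {Ω : Set (Euc d)} {k : ℕ} (s : ℝ) (U V : SobFun d Ω k) : ℝ :=
  Real.sqrt ((∑ j ∈ Finset.range (k+1), ∑ v : Fin j → Fin d,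
      (L2N Ω (fun x => U.D j v x - V.D j v x))^2)
    + if (k : ℝ) < s then
        ∑ v : Fin k → Fin d, (gagliardo Ω (s - k) (fun x => U.D k v x - V.D k v x))^2
      else 0)

/-- Membership in H¹₀(Ω) : the extension by zero belongs to H¹(ℝ^d). -/
def MemH10 {d : ℕ} (Ω : Set (Euc d)) (u : Euc d → ℂ) : Prop :=
  MemL2 univ (Ω.indicator u) ∧
  ∀ i : Fin d, ∃ v : Euc d → ℂ, MemL2 univ v ∧ IsWeakDeriv univ i (Ω.indicator u) v

/-- The principal Dirichlet eigenvalue of -Δ on Ω, via the Rayleigh variational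
characterization (infimum over smooth compactly supported test functions). -/
def lambda1 {d : ℕ} (Ω : Set (Euc d)) : ℝ :=
  sInf { r : ℝ | ∃ φ : Euc d → ℂ, IsTestFun Ω φ ∧ φ ≠ 0 ∧
    r = (∫ x, ‖fderiv ℝ φ x‖^2) / (∫ x, ‖φ x‖^2) }

/-- Ω has a smooth boundary: it is a sublevel set of a smooth function whose
gradient does not vanish on the boundary. -/
def HasSmoothBoundary {d : ℕ} (Ω : Set (Euc d)) : Prop :=
  ∃ f : Euc d → ℝ, ContDiff ℝ (⊤ : ℕ∞) f ∧ Ω = {x | f x < 0} ∧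
    ∀ x ∈ frontier Ω, fderiv ℝ f x ≠ 0

/-- Uniform ellipticity: Re ∑ ε^{ij}(x) ξ_i conj(ξ_j) ≥ θ |ξ|² for a.e. x ∈ Ω. -/
def UniformlyElliptic {d : ℕ} (Ω : Set (Euc d))
    (ε : Euc d → Matrix (Fin d) (Fin d) ℂ) (θ : ℝ) : Prop :=
  ∀ᵐ x ∂(volume.restrict Ω), ∀ ξ : Fin d → ℂ,
    θ * ∑ i, ‖ξ i‖^2 ≤ (∑ i, ∑ j, ε x i j * ξ i * (starRingEnd ℂ) (ξ j)).re

/-- ε ∈ W^{1,∞}(Ω; ℂ^{d×d}) : every entry is bounded and Lipschitz on Ω. -/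
def EpsW1inf {d : ℕ} (Ω : Set (Euc d)) (ε : Euc d → Matrix (Fin d) (Fin d) ℂ) : Prop :=
  ∃ K : ℝ≥0, ∀ i j, LipschitzOnWith K (fun x => ε x i j) Ω ∧ ∀ x ∈ Ω, ‖ε x i j‖ ≤ (K : ℝ)

/-- `Lu` is a representative of  L u = -∇·(ε ∇u) + κ² u  for the H²-function U:
there are weak divergence data g i = ∂_i (∑_j ε^{ij} ∂_j u)  with
Lu = -∑ g i + κ² u  a.e. on Ω. -/
def IsLu {d : ℕ} (Ω : Set (Euc d)) (ε : Euc d → Matrix (Fin d) (Fin d) ℂ)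
    (κ2 : Euc d → ℂ) (U : SobFun d Ω 2) (Lu : Euc d → ℂ) : Prop :=
  ∃ g : Fin d → Euc d → ℂ,
    (∀ i, IsWeakDeriv Ω i (fun x => ∑ j, ε x i j * U.d1 j x) (g i)) ∧
    ∀ᵐ x ∂(volume.restrict Ω), Lu x = -(∑ i, g i x) + κ2 x * U.u x

/-- U ∈ H²(Ω) is a strong solution of the nPBE
  -∇·(ε ∇u) + κ² sinh u = f in Ω,  u = g on ∂Ω,
where the boundary datum is represented by a lift w (u - w ∈ H¹₀(Ω)). -/
def IsStrongSolNPBE {d : ℕ} (Ω : Set (Euc d)) (ε : Euc d → Matrix (Fin d) (Fin d) ℂ)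
    (κ2 : Euc d → ℂ) (f w : Euc d → ℂ) (U : SobFun d Ω 2) : Prop :=
  (∃ g : Fin d → Euc d → ℂ,
    (∀ i, IsWeakDeriv Ω i (fun x => ∑ j, ε x i j * U.d1 j x) (g i)) ∧
    ∀ᵐ x ∂(volume.restrict Ω),
      -(∑ i, g i x) + κ2 x * Complex.sinh (U.u x) = f x) ∧
  MemH10 Ω (fun x => U.u x - w x)

/-- U ∈ H¹(Ω) is a weak solution of the linear PBE L u = f with boundary lift w. -/
def IsWeakSolLinPBE {d : ℕ} (Ω : Set (Euc d)) (ε : Euc d → Matrix (Fin d) (Fin d) ℂ)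
    (κ2 : Euc d → ℂ) (f w : Euc d → ℂ) (U : SobFun d Ω 1) : Prop :=
  MemH10 Ω (fun x => U.u x - w x) ∧
  ∀ Φ : SobFun d Ω 1, MemH10 Ω Φ.u →
    (∫ x in Ω, ((∑ i, ∑ j, ε x i j * U.d1 j x * (starRingEnd ℂ) (Φ.d1 i x))
        + κ2 x * U.u x * (starRingEnd ℂ) (Φ.u x)))
      = ∫ x in Ω, f x * (starRingEnd ℂ) (Φ.u x)

/-- Taylor coefficients n_k of sinh z - z : 1/k! for odd k, 0 for even k. -/
def nk (k : ℕ) : ℝ := if Odd k then 1 / (Nat.factorial k) else 0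

/-- Dilation about `x0`. -/
def dil {d : ℕ} (x0 : Euc d) (s : ℝ) (x : Euc d) : Euc d := x0 + s • (x - x0)

lemma dil_cont {d : ℕ} (x0 : Euc d) (s : ℝ) : Continuous (dil x0 s) := by
  unfold dil; fun_prop

lemma dil_map {d : ℕ} (x0 : Euc d) {s : ℝ} (hs : s ≠ 0) :
    Measure.map (dil x0 s) volume = ENNReal.ofReal (abs (s ^ d)⁻¹) • volume := by
  have h1 : dil x0 s = (fun x => x0 + x) ∘ (fun x => s • x) ∘ (fun x => x - x0) := by
    funext x; simp [dil]
  have m1 : Measurable (fun x : Euc d => x0 + x) := by fun_prop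
  have m2 : Measurable (fun x : Euc d => s • x) := by fun_prop
  have m3 : Measurable (fun x : Euc d => x - x0) := by fun_prop
  rw [h1, ← Measure.map_map m1 (m2.comp m3), ← Measure.map_map m2 m3]
  have h3 : Measure.map (fun x : Euc d => x - x0) volume = volume :=
    (measurePreserving_sub_right volume x0).map_eq
  rw [h3, Measure.map_addHaar_smul _ hs, Measure.map_smul]
  rw [(measurePreserving_add_left volume x0).map_eq]
  simp

lemma dil_map_le {d : ℕ} (x0 : Euc d) {s : ℝ} (hs : 1 ≤ s) :
    Measure.map (dil x0 s) volume ≤ volume := by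
  rw [dil_map x0 (by positivity)]
  have h : ENNReal.ofReal (abs (s ^ d)⁻¹) ≤ 1 := by
    rw [ENNReal.ofReal_le_one, abs_of_nonneg (by positivity)]
    exact inv_le_one_of_one_le₀ (one_le_pow₀ hs)
  intro A
  simp only [Measure.smul_apply, smul_eq_mul]
  exact mul_le_of_le_one_left (by simp) h

lemma dil_memLp {d : ℕ} (x0 : Euc d) {s : ℝ} (hs : 1 ≤ s) {v : Euc d → ℂ}
    (hv : MemLp v 2 volume) :
    MemLp (fun x => v (dil x0 s x)) 2 volume ∧
      eLpNorm (fun x => v (dil x0 s x)) 2 volume ≤ eLpNorm v 2 volume := by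
  have hm : MemLp v 2 (Measure.map (dil x0 s) volume) := hv.mono_measure (dil_map_le x0 hs)
  refine ⟨hm.comp_of_map (dil_cont x0 s).aemeasurable, ?_⟩
  have := eLpNorm_map_measure (p := 2) hm.1 (dil_cont x0 s).aemeasurable
  rw [Function.comp_def] at this
  rw [← this]
  exact eLpNorm_mono_measure _ (dil_map_le x0 hs)

open scoped Convolution in
/-- mollification -/
def moll {d : ℕ} (φ : ContDiffBump (0 : Euc d)) (v : Euc d → ℂ) : Euc d → ℂ :=
  (φ.normed volume ⋆[ContinuousLinearMap.lsmul ℝ ℝ, volume] v)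

lemma moll_apply {d : ℕ} (φ : ContDiffBump (0 : Euc d)) (v : Euc d → ℂ) (x : Euc d) :
    moll φ v x = ∫ y, φ.normed volume y • v (x - y) := rfl

lemma moll_contr {d : ℕ} (φ : ContDiffBump (0 : Euc d)) {v : Euc d → ℂ}
    (hv : MemLp v 2 volume) : eLpNorm (moll φ v) 2 volume ≤ eLpNorm v 2 volume := by
  set ρ : Euc d → ℝ := φ.normed volume with hρ
  have hρc : Continuous ρ := φ.continuous_normed
  have hρ0 : ∀ y, 0 ≤ ρ y := φ.nonneg_normed
  have hρi : Integrable ρ volume := φ.integrable_normed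
  let P : Measure (Euc d) := volume.withDensity (fun y => ENNReal.ofReal (ρ y))
  have hPm : Measurable (fun y => ENNReal.ofReal (ρ y)) := hρc.measurable.ennreal_ofReal
  have hP : IsProbabilityMeasure P := ⟨by
    simp only [P]
    rw [withDensity_apply _ MeasurableSet.univ, Measure.restrict_univ,
      ← ofReal_integral_eq_lintegral_ofReal hρi (Eventually.of_forall hρ0),
      φ.integral_normed, ENNReal.ofReal_one]⟩
  have hac : P ≪ volume := withDensity_absolutelyContinuous _ _
  -- pointwise bound
  have key : ∀ x, ‖moll φ v x‖ₑ ^ (2:ℝ) ≤ ∫⁻ y, ENNReal.ofReal (ρ y) * ‖v (x - y)‖ₑ ^ (2:ℝ) := by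
    intro x
    have hq : AEStronglyMeasurable (fun y => v (x - y)) volume :=
      hv.1.comp_quasiMeasurePreserving
        (quasiMeasurePreserving_sub_left_of_right_invariant volume x)
    have hq' : AEStronglyMeasurable (fun y => v (x - y)) P := hq.mono_ac hac
    have h1 : ‖moll φ v x‖ₑ ≤ ∫⁻ y, ‖v (x - y)‖ₑ ∂P := by
      rw [moll_apply]
      refine (enorm_integral_le_lintegral_enorm _).trans ?_
      simp only [P]
      rw [lintegral_withDensity_eq_lintegral_mul₀ hPm.aemeasurable hq.enorm]
      refine lintegral_mono fun y => ?_
      simp only [enorm_smul, Pi.mul_apply]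
      rw [Real.enorm_of_nonneg (hρ0 y)]
    have h2 := eLpNorm'_le_eLpNorm'_of_exponent_le (p := 1) (q := 2) one_pos (by norm_num) P hq'
    simp only [eLpNorm', ENNReal.rpow_one, div_one] at h2
    have h3 : ∫⁻ y, ‖v (x - y)‖ₑ ^ (2:ℝ) ∂P = ∫⁻ y, ENNReal.ofReal (ρ y) * ‖v (x - y)‖ₑ ^ (2:ℝ) := by
      simp only [P]
      rw [lintegral_withDensity_eq_lintegral_mul₀ hPm.aemeasurable (hq.enorm.pow_const _)]
      rfl
    calc ‖moll φ v x‖ₑ ^ (2:ℝ) ≤ ((∫⁻ y, ‖v (x - y)‖ₑ ^ (2:ℝ) ∂P) ^ (1/2:ℝ)) ^ (2:ℝ) := by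
          gcongr
          exact h1.trans h2
      _ = _ := by rw [← ENNReal.rpow_mul, h3]; norm_num
  rw [eLpNorm_eq_lintegral_rpow_enorm_toReal (by norm_num) (by norm_num),
    eLpNorm_eq_lintegral_rpow_enorm_toReal (by norm_num) (by norm_num)]
  simp only [ENNReal.toReal_ofNat]
  gcongr ?_ ^ _
  calc ∫⁻ x, ‖moll φ v x‖ₑ ^ (2:ℝ)
      ≤ ∫⁻ x, ∫⁻ y, ENNReal.ofReal (ρ y) * ‖v (x - y)‖ₑ ^ (2:ℝ) := lintegral_mono key
    _ = ∫⁻ y, ∫⁻ x, ENNReal.ofReal (ρ y) * ‖v (x - y)‖ₑ ^ (2:ℝ) := by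
        refine lintegral_lintegral_swap ?_
        refine AEMeasurable.mul (hPm.comp measurable_snd).aemeasurable ?_
        refine AEMeasurable.pow_const ?_ _
        refine AEStronglyMeasurable.enorm ?_
        exact hv.1.comp_quasiMeasurePreserving (quasiMeasurePreserving_sub volume volume)
    _ = ∫⁻ y, ENNReal.ofReal (ρ y) * ∫⁻ x, ‖v x‖ₑ ^ (2:ℝ) := by
        refine lintegral_congr fun y => ?_
        rw [lintegral_const_mul' _ _ ENNReal.ofReal_ne_top]
        congr 1
        exact lintegral_sub_right_eq_self (fun x => ‖v x‖ₑ ^ (2:ℝ)) y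
    _ = ∫⁻ x, ‖v x‖ₑ ^ (2:ℝ) := by
        rw [lintegral_mul_const _ hPm,
          ← ofReal_integral_eq_lintegral_ofReal hρi (Eventually.of_forall hρ0),
          φ.integral_normed, ENNReal.ofReal_one, one_mul]

lemma moll_integrable {d : ℕ} (φ : ContDiffBump (0 : Euc d)) {v : Euc d → ℂ}
    (hv : LocallyIntegrable v volume) (x : Euc d) :
    Integrable (fun y => φ.normed volume y • v (x - y)) volume :=
  φ.hasCompactSupport_normed.convolutionExists_left (ContinuousLinearMap.lsmul ℝ ℝ)
    φ.continuous_normed hv x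

lemma memLp2_locInt {d : ℕ} {v : Euc d → ℂ} (hv : MemLp v 2 volume) :
    LocallyIntegrable v volume := hv.locallyIntegrable (by norm_num)

lemma moll_sub {d : ℕ} (φ : ContDiffBump (0 : Euc d)) {v w : Euc d → ℂ}
    (hv : LocallyIntegrable v volume) (hw : LocallyIntegrable w volume) :
    moll φ (fun x => v x - w x) = fun x => moll φ v x - moll φ w x := by
  funext x
  simp only [moll_apply, smul_sub]
  exact integral_sub (moll_integrable φ hv x) (moll_integrable φ hw x)

lemma dil_dist {d : ℕ} (x0 : Euc d) (s : ℝ) (x : Euc d) :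
    dist (dil x0 s x) x = |s - 1| * ‖x - x0‖ := by
  rw [dist_eq_norm]
  have : dil x0 s x - x = (s - 1) • (x - x0) := by
    simp only [dil, sub_smul, one_smul]; abel
  rw [this, norm_smul, Real.norm_eq_abs]

lemma dil_norm {d : ℕ} (x0 : Euc d) (s : ℝ) (x : Euc d) :
    ‖dil x0 s x - x0‖ = |s| * ‖x - x0‖ := by
  simp [dil, norm_smul]

lemma approx_cc {d : ℕ} (x0 : Euc d) {g : Euc d → ℂ} (hg : Continuous g)
    (hgc : HasCompactSupport g) {e : ℝ≥0∞} (he : e ≠ 0) :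
    ∃ δ > 0, ∀ s : ℝ, 1 ≤ s → s < 1 + δ → ∀ φ : ContDiffBump (0 : Euc d), φ.rOut < δ →
      eLpNorm (fun x => moll φ (fun y => g (dil x0 s y)) x - g x) 2 volume ≤ e := by
  obtain ⟨R, hR0, hR⟩ : ∃ R > 0, ∀ x, R ≤ ‖x - x0‖ → g x = 0 := by
    obtain ⟨R, hR⟩ := hgc.isCompact.isBounded.subset_ball x0
    refine ⟨max R 1, by positivity, fun x hx => ?_⟩
    by_contra h
    have := hR (subset_tsupport g h)
    rw [Metric.mem_ball, dist_eq_norm] at this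
    exact absurd (this.trans_le (le_max_left R 1)) (not_lt.2 hx)
  let B : Set (Euc d) := Metric.closedBall x0 (R+1)
  have hBfin : volume B < ⊤ := measure_closedBall_lt_top
  obtain ⟨η, hη0, hη⟩ : ∃ η : ℝ, 0 < η ∧ (volume B) ^ (1/2:ℝ) * ENNReal.ofReal η ≤ e := by
    have hc : (volume B) ^ (1/2:ℝ) ≠ ⊤ := ENNReal.rpow_ne_top_of_nonneg (by norm_num) hBfin.ne
    have ht : Tendsto (fun η : ℝ => (volume B) ^ (1/2:ℝ) * ENNReal.ofReal η) (𝓝[>] 0) (𝓝 0) := by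
      have h1 : Tendsto (fun η : ℝ => ENNReal.ofReal η) (𝓝[>] 0) (𝓝 0) := by
        have := (ENNReal.continuous_ofReal.tendsto 0).mono_left (nhdsWithin_le_nhds (s := Ioi 0))
        simpa using this
      simpa using ENNReal.Tendsto.const_mul h1 (Or.inr hc)
    have h2 := ht.eventually (gt_mem_nhds (pos_iff_ne_zero.2 he))
    obtain ⟨η, h3, h4⟩ := (h2.and self_mem_nhdsWithin).exists
    exact ⟨η, h4, h3.le⟩
  have huc := hgc.uniformContinuous_of_continuous hg
  obtain ⟨δ0, hδ0, hδ⟩ := Metric.uniformContinuous_iff.1 huc η hη0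
  refine ⟨min 1 (δ0 / (R + 4)), by positivity, fun s hs1 hs2 φ hφ => ?_⟩
  have hφ1 : φ.rOut < 1 := hφ.trans_le (min_le_left _ _)
  have hφ2 : φ.rOut < δ0 / (R+4) := hφ.trans_le (min_le_right _ _)
  have hs3 : s - 1 < δ0 / (R+4) := by
    have := min_le_right 1 (δ0 / (R+4)); linarith
  have hmeas : AEStronglyMeasurable (fun y => g (dil x0 s y)) volume :=
    (hg.comp (dil_cont x0 s)).aestronglyMeasurable
  have hpt : ∀ x, dist (moll φ (fun y => g (dil x0 s y)) x) (g x) ≤ η := by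
    intro x
    refine dist_convolution_le hη0.le φ.support_normed_eq.subset φ.nonneg_normed
      φ.integral_normed hmeas ?_
    intro y hy
    rw [Metric.mem_ball] at hy
    by_cases hx : ‖x - x0‖ ≤ R + 1
    · refine (hδ ?_).le
      have h1 : ‖y - x0‖ ≤ R + 2 := by
        have : ‖y - x0‖ ≤ ‖y - x‖ + ‖x - x0‖ := by
          simpa using norm_add_le (y - x) (x - x0)
        rw [← dist_eq_norm y x] at this; linarith
      have h2 := dist_triangle (dil x0 s y) y x
      rw [dil_dist, abs_of_nonneg (by linarith)] at h2
      have h3 : (s - 1) * ‖y - x0‖ ≤ δ0 / (R+4) * (R + 2) := by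
        gcongr
      have h4 : δ0 / (R+4) * (R+2) + δ0 / (R+4) < δ0 := by
        have : δ0 / (R+4) * (R+2) + δ0 / (R+4) = δ0 * ((R+3)/(R+4)) := by field_simp; ring
        rw [this]
        have : (R+3)/(R+4) < 1 := by rw [div_lt_one (by positivity)]; linarith
        nlinarith
      linarith
    · push Not at hx
      have h1 : R ≤ ‖y - x0‖ := by
        have : ‖x - x0‖ ≤ ‖x - y‖ + ‖y - x0‖ := by
          simpa using norm_add_le (x - y) (y - x0)
        rw [← dist_eq_norm x y, dist_comm] at this; linarith
      have h2 : R ≤ ‖dil x0 s y - x0‖ := by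
        rw [dil_norm, abs_of_nonneg (by linarith)]
        nlinarith
      rw [hR _ h2, hR x (by linarith)]
      simpa using hη0.le
  have hout : ∀ x, x ∉ B → moll φ (fun y => g (dil x0 s y)) x - g x = 0 := by
    intro x hx
    have hx : R + 1 < ‖x - x0‖ := by
      simpa [B, dist_eq_norm] using hx
    have h0 : dist (moll φ (fun y => g (dil x0 s y)) x) 0 ≤ 0 := by
      refine dist_convolution_le le_rfl φ.support_normed_eq.subset φ.nonneg_normed
        φ.integral_normed hmeas ?_
      intro y hy
      rw [Metric.mem_ball] at hy
      have h1 : R ≤ ‖y - x0‖ := by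
        have : ‖x - x0‖ ≤ ‖x - y‖ + ‖y - x0‖ := by
          simpa using norm_add_le (x - y) (y - x0)
        rw [← dist_eq_norm x y, dist_comm] at this; linarith
      have h2 : R ≤ ‖dil x0 s y - x0‖ := by
        rw [dil_norm, abs_of_nonneg (by linarith)]
        nlinarith
      rw [hR _ h2]; simp
    rw [dist_zero_right] at h0
    rw [hR x (by linarith), norm_le_zero_iff.1 h0, sub_zero]
  have hsupp : (fun x => moll φ (fun y => g (dil x0 s y)) x - g x) =
      B.indicator (fun x => moll φ (fun y => g (dil x0 s y)) x - g x) := by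
    funext x
    by_cases hx : x ∈ B
    · rw [indicator_of_mem hx]
    · rw [indicator_of_notMem hx, hout x hx]
  rw [hsupp, eLpNorm_indicator_eq_eLpNorm_restrict measurableSet_closedBall]
  refine (eLpNorm_le_of_ae_bound (C := η) (Eventually.of_forall fun x => ?_)).trans ?_
  · simpa [dist_eq_norm] using hpt x
  · simpa using hη

lemma approx_L2 {d : ℕ} (x0 : Euc d) {v : Euc d → ℂ} (hv : MemLp v 2 volume)
    {e : ℝ≥0∞} (he : e ≠ 0) :
    ∃ δ > 0, ∀ s : ℝ, 1 ≤ s → s < 1 + δ → ∀ φ : ContDiffBump (0 : Euc d), φ.rOut < δ →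
      eLpNorm (fun x => moll φ (fun y => v (dil x0 s y)) x - v x) 2 volume ≤ e := by
  have he3 : e / 3 ≠ 0 := by simp [he]
  obtain ⟨g, hgc, hvg, hg, hgm⟩ := hv.exists_hasCompactSupport_eLpNorm_sub_le (by norm_num) he3
  obtain ⟨δ, hδ, H⟩ := approx_cc x0 hg hgc he3
  refine ⟨δ, hδ, fun s hs1 hs2 φ hφ => ?_⟩
  have hd : MemLp (fun x => v x - g x) 2 volume := hv.sub hgm
  obtain ⟨hdm, hdn⟩ := dil_memLp x0 hs1 hd
  have hvl := memLp2_locInt (dil_memLp x0 hs1 hv).1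
  have hgl := memLp2_locInt (dil_memLp x0 hs1 hgm).1
  have hms : ∀ {w : Euc d → ℂ}, MemLp w 2 volume → AEStronglyMeasurable (moll φ w) volume := by
    intro w hw
    exact ((φ.hasCompactSupport_normed.continuous_convolution_left
      (ContinuousLinearMap.lsmul ℝ ℝ) φ.continuous_normed (memLp2_locInt hw))).aestronglyMeasurable
  have hsplit : (fun x => moll φ (fun y => v (dil x0 s y)) x - v x) =
      (moll φ (fun y => v (dil x0 s y) - g (dil x0 s y))) +
      ((fun x => moll φ (fun y => g (dil x0 s y)) x - g x) + (fun x => g x - v x)) := by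
    rw [moll_sub φ hvl hgl]
    funext x; simp
  rw [hsplit]
  have m1 := hms hdm
  have m2 : AEStronglyMeasurable (fun x => moll φ (fun y => g (dil x0 s y)) x - g x) volume :=
    (hms (dil_memLp x0 hs1 hgm).1).sub hgm.1
  have m3 : AEStronglyMeasurable (fun x => g x - v x) volume := hgm.1.sub hv.1
  refine (eLpNorm_add_le m1 (m2.add m3) (by norm_num)).trans ?_
  have e1 : eLpNorm (moll φ (fun y => v (dil x0 s y) - g (dil x0 s y))) 2 volume ≤ e / 3 :=
    (moll_contr φ hdm).trans (hdn.trans hvg)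
  have e3 : eLpNorm (fun x => g x - v x) 2 volume ≤ e / 3 := by
    have : (fun x => g x - v x) = g - v := rfl
    rw [this, eLpNorm_sub_comm]; exact hvg
  calc _ ≤ e/3 + (e/3 + e/3) := by
        refine add_le_add e1 ((eLpNorm_add_le m2 m3 (by norm_num)).trans ?_)
        exact add_le_add (H s hs1 hs2 φ hφ) e3
    _ = e := by rw [← add_assoc, ENNReal.add_thirds]

/-- `a ∈ H¹(Ω)` with weak gradient `a'`. -/
structure H1f {d : ℕ} (Ω : Set (Euc d)) (a : Euc d → ℂ) (a' : Fin d → Euc d → ℂ) : Prop where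
  m : MemL2 Ω a
  m' : ∀ i, MemL2 Ω (a' i)
  w : ∀ i, IsWeakDeriv Ω i a (a' i)

/-- `c ∈ H¹₀(Ω)` (zero extension in `H¹(ℝ^d)`) with gradient `c'`. -/
structure H10f {d : ℕ} (Ω : Set (Euc d)) (c : Euc d → ℂ) (c' : Fin d → Euc d → ℂ) : Prop where
  m : MemL2 Ω c
  m' : ∀ i, MemL2 Ω (c' i)
  w : ∀ i, ∀ φ : Euc d → ℂ, IsTestFun univ φ →
    ∫ x in Ω, c x * pd i φ x = - ∫ x in Ω, c' i x * φ x

lemma IsTestFun.mono {d : ℕ} {Ω Ω' : Set (Euc d)} (h : Ω ⊆ Ω') {φ : Euc d → ℂ}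
    (hφ : IsTestFun Ω φ) : IsTestFun Ω' φ := ⟨hφ.1, hφ.2.1, hφ.2.2.trans h⟩

lemma IsTestFun.pd {d : ℕ} {Ω : Set (Euc d)} {φ : Euc d → ℂ}
    (hφ : IsTestFun Ω φ) (i : Fin d) : IsTestFun Ω (pd i φ) := by
  refine ⟨?_, ?_, ?_⟩
  · exact (hφ.1.fderiv_right (m := (⊤ : ℕ∞)) (by simp)).clm_apply contDiff_const
  · exact hφ.2.1.fderiv_apply ℝ _
  · exact (tsupport_fderiv_apply_subset ℝ _).trans hφ.2.2

lemma H10f.toH1f {d : ℕ} {Ω : Set (Euc d)} {c : Euc d → ℂ} {c' : Fin d → Euc d → ℂ}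
    (h : H10f Ω c c') : H1f Ω c c' :=
  ⟨h.m, h.m', fun i φ hφ => h.w i φ (hφ.mono (subset_univ _))⟩

lemma moll_test {d : ℕ} {Ω K : Set (Euc d)} (hK : IsCompact K) {δ : ℝ}
    (hKΩ : Metric.cthickening δ K ⊆ Ω) {w : Euc d → ℂ} (hw : LocallyIntegrable w volume)
    (hwK : ∀ x, x ∉ K → w x = 0) (φ : ContDiffBump (0 : Euc d)) (hφ : φ.rOut < δ) :
    IsTestFun Ω (moll φ w) := by
  have h0 : ∀ x, x ∉ Metric.cthickening δ K → moll φ w x = 0 := by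
    intro x hx
    have h0 : dist (moll φ w x) 0 ≤ 0 := by
      refine dist_convolution_le le_rfl φ.support_normed_eq.subset φ.nonneg_normed
        φ.integral_normed hw.aestronglyMeasurable ?_
      intro y hy
      have : y ∉ K := by
        intro hyK
        apply hx
        rw [Metric.mem_ball] at hy
        exact Metric.mem_cthickening_of_dist_le x y δ K hyK (by rw [dist_comm]; linarith)
      rw [hwK y this]; simp
    rw [dist_zero_right] at h0
    exact norm_le_zero_iff.1 h0
  have hs : tsupport (moll φ w) ⊆ Metric.cthickening δ K := by
    refine closure_minimal (fun x hx => ?_) Metric.isClosed_cthickening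
    by_contra h
    exact hx (h0 x h)
  refine ⟨?_, ?_, hs.trans hKΩ⟩
  · exact φ.hasCompactSupport_normed.contDiff_convolution_left _ φ.contDiff_normed hw
  · exact HasCompactSupport.of_support_subset_isCompact hK.cthickening
      (subset_tsupport _ |>.trans hs)

lemma moll_pd {d : ℕ} (φ : ContDiffBump (0 : Euc d)) {w w' : Euc d → ℂ} (i : Fin d)
    (hw : LocallyIntegrable w volume)
    (hd : ∀ ψ : Euc d → ℂ, IsTestFun univ ψ → ∫ x, w x * pd i ψ x = - ∫ x, w' x * ψ x)
    (x : Euc d) : pd i (moll φ w) x = moll φ w' x := by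
  set ρ : Euc d → ℝ := φ.normed volume with hρ
  have hρd : ContDiff ℝ (⊤ : ℕ∞) ρ := φ.contDiff_normed
  have hρc : HasCompactSupport ρ := φ.hasCompactSupport_normed
  have h1 := hρc.hasFDerivAt_convolution_left (ContinuousLinearMap.lsmul ℝ ℝ) (μ := volume)
    (hρd.of_le (by norm_cast)) hw x
  have h2 : pd i (moll φ w) x = ∫ y, (fderiv ℝ ρ y (EuclideanSpace.single i 1)) • w (x - y) := by
    unfold pd
    rw [show moll φ w = convolution ρ w (ContinuousLinearMap.lsmul ℝ ℝ) volume from rfl, h1.fderiv]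
    have hcd : Continuous (fderiv ℝ ρ) := hρd.continuous_fderiv (by simp)
    have hI := (hρc.fderiv ℝ).convolutionExists_left (μ := volume)
        ((ContinuousLinearMap.lsmul ℝ ℝ : ℝ →L[ℝ] ℂ →L[ℝ] ℂ).precompL (Euc d)) hcd hw x
    have h5 := ContinuousLinearMap.integral_apply hI (EuclideanSpace.single i (1:ℝ))
    rw [convolution_def]
    refine h5.trans ?_
    refine integral_congr_ae (Eventually.of_forall fun y => ?_)
    simp only [ContinuousLinearMap.precompL_apply]
    rfl
  let ψ : Euc d → ℂ := fun y => ((ρ (x - y) : ℝ) : ℂ)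
  have hψ : IsTestFun univ ψ := by
    refine ⟨?_, ?_, subset_univ _⟩
    · exact Complex.ofRealCLM.contDiff.comp (hρd.comp (contDiff_const.sub contDiff_id))
    · have : HasCompactSupport (fun y => ρ (x - y)) :=
        hρc.comp_homeomorph (Homeomorph.subLeft x)
      exact this.comp_left (g := fun r : ℝ => (r : ℂ)) (by simp)
  have hψd : ∀ y, pd i ψ y = -((fderiv ℝ ρ (x - y) (EuclideanSpace.single i 1) : ℝ) : ℂ) := by
    intro y
    have hρa : HasFDerivAt ρ (fderiv ℝ ρ (x - y)) (x - y) :=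
      (hρd.differentiable (by simp) _).hasFDerivAt
    have := (Complex.ofRealCLM.hasFDerivAt (x := ρ (x - y))).comp y
      (hρa.comp y ((hasFDerivAt_id y).const_sub x))
    unfold pd
    have h3 : fderiv ℝ ψ y = _ := this.fderiv
    rw [h3]
    simp
  have h4 := hd ψ hψ
  rw [h2, moll_apply]
  rw [← integral_sub_left_eq_self _ volume x, ← integral_sub_left_eq_self (fun y => ρ y • w' (x - y)) volume x]
  simp only [sub_sub_cancel]
  have e1 : ∫ y, w y * pd i ψ y = - ∫ y, (fderiv ℝ ρ (x - y) (EuclideanSpace.single i 1)) • w y := by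
    rw [← integral_neg]
    refine integral_congr_ae (Eventually.of_forall fun y => ?_)
    simp only [hψd, Complex.real_smul]; ring
  have e2 : ∫ y, w' y * ψ y = ∫ y, ρ (x - y) • w' y := by
    refine integral_congr_ae (Eventually.of_forall fun y => ?_)
    simp only [ψ, Complex.real_smul]; ring
  rw [e1, e2] at h4
  exact neg_injective h4

lemma integral_dil {d : ℕ} (x0 : Euc d) (s : ℝ) (F : Euc d → ℂ) :
    ∫ x, F (dil x0 s x) = |(s ^ d)⁻¹| • ∫ x, F x := by
  have h1 : ∫ x, F (dil x0 s x) = ∫ x, F (x0 + s • x) := by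
    have := integral_sub_right_eq_self (μ := volume) (fun x => F (x0 + s • x)) x0
    exact this
  rw [h1]
  have h2 := Measure.integral_comp_smul (volume : Measure (Euc d)) (fun x => F (x0 + x)) s
  rw [h2, integral_add_left_eq_self (μ := volume) F x0]
  simp

lemma dil_weak {d : ℕ} (x0 : Euc d) {s : ℝ} (hs : 0 < s) {v v' : Euc d → ℂ} (i : Fin d)
    (hd : ∀ ψ : Euc d → ℂ, IsTestFun univ ψ → ∫ x, v x * pd i ψ x = - ∫ x, v' x * ψ x)
    (ψ : Euc d → ℂ) (hψ : IsTestFun univ ψ) :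
    ∫ x, v (dil x0 s x) * pd i ψ x = - ∫ x, ((s : ℂ) * v' (dil x0 s x)) * ψ x := by
  have hinv : ∀ x, dil x0 s⁻¹ (dil x0 s x) = x := by
    intro x
    simp [dil, smul_smul, hs.ne']
  have hinv' : ∀ x, dil x0 s (dil x0 s⁻¹ x) = x := by
    intro x
    simp [dil, smul_smul, hs.ne']
  let χ : Euc d → ℂ := fun x => ψ (dil x0 s⁻¹ x)
  have hdc : ContDiff ℝ (⊤ : ℕ∞) (dil x0 s⁻¹) := by unfold dil; fun_prop
  let H : Euc d ≃ₜ Euc d :=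
    { toFun := dil x0 s⁻¹, invFun := dil x0 s, left_inv := hinv', right_inv := hinv,
      continuous_toFun := dil_cont _ _, continuous_invFun := dil_cont _ _ }
  have hχ : IsTestFun univ χ :=
    ⟨hψ.1.comp hdc, hψ.2.1.comp_homeomorph H, subset_univ _⟩
  have hχd : ∀ x, pd i χ x = (s⁻¹ : ℝ) • pd i ψ (dil x0 s⁻¹ x) := by
    intro x
    have h1 : HasFDerivAt (dil x0 s⁻¹) (s⁻¹ • ContinuousLinearMap.id ℝ (Euc d)) x := by
      unfold dil
      exact (((hasFDerivAt_id x).sub_const x0).const_smul s⁻¹).const_add x0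
    have h2 := ((hψ.1.differentiable (by simp) (dil x0 s⁻¹ x)).hasFDerivAt).comp x h1
    unfold pd
    have h3 : fderiv ℝ χ x = _ := h2.fderiv
    rw [h3]; simp
  have h := hd χ hχ
  have e1 := integral_dil x0 s (fun x => v x * pd i χ x)
  have e2 := integral_dil x0 s (fun x => v' x * χ x)
  simp only [hχd, χ, hinv] at e1 e2
  simp only [χ, hχd] at h
  rw [h, smul_neg, ← e2] at e1
  have e3 : ∫ x, v (dil x0 s x) * pd i ψ x
      = (s : ℂ) * ∫ x, v (dil x0 s x) * (s⁻¹ : ℝ) • pd i ψ x := by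
    rw [← integral_const_mul]
    refine integral_congr_ae (Eventually.of_forall fun y => ?_)
    simp only [Complex.real_smul]
    have : (s : ℂ) ≠ 0 := by exact_mod_cast hs.ne'
    push_cast; field_simp
  rw [e3, e1, mul_neg, ← integral_const_mul]
  congr 1
  refine integral_congr_ae (Eventually.of_forall fun y => ?_)
  simp only; ring

lemma ind_mul_int {d : ℕ} {Ω : Set (Euc d)} (hΩ : IsOpen Ω) (c g : Euc d → ℂ) :
    ∫ x, Ω.indicator c x * g x = ∫ x in Ω, c x * g x := by
  rw [← integral_indicator hΩ.measurableSet]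
  refine integral_congr_ae (Eventually.of_forall fun x => ?_)
  by_cases hx : x ∈ Ω <;> simp [hx]

lemma moll_smul {d : ℕ} (φ : ContDiffBump (0 : Euc d)) (v : Euc d → ℂ) (k : ℂ) (x : Euc d) :
    moll φ (fun x => k * v x) x = k * moll φ v x := by
  simp only [moll_apply]
  rw [← integral_const_mul]
  refine integral_congr_ae (Eventually.of_forall fun y => ?_)
  simp only [Complex.real_smul]; ring

lemma H10f.dense {d : ℕ} {Ω : Set (Euc d)} (hΩo : IsOpen Ω) (hΩb : Bornology.IsBounded Ω)
    (hΩc : Convex ℝ Ω) {x0 : Euc d} (hx0 : x0 ∈ Ω) {c : Euc d → ℂ} {c' : Fin d → Euc d → ℂ}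
    (h : H10f Ω c c') {e : ℝ≥0∞} (he : e ≠ 0) :
    ∃ φ : Euc d → ℂ, IsTestFun Ω φ ∧ eLpNorm (fun x => φ x - c x) 2 (volume.restrict Ω) ≤ e ∧
      ∀ i, eLpNorm (fun x => pd i φ x - c' i x) 2 (volume.restrict Ω) ≤ e := by
  have he2 : e / 2 ≠ 0 := by simp [he]
  set C : Euc d → ℂ := Ω.indicator c with hC
  set C' : Fin d → Euc d → ℂ := fun i => Ω.indicator (c' i) with hC'
  have hCm : MemLp C 2 volume := (memLp_indicator_iff_restrict hΩo.measurableSet).2 h.m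
  have hCm' : ∀ i, MemLp (C' i) 2 volume := fun i =>
    (memLp_indicator_iff_restrict hΩo.measurableSet).2 (h.m' i)
  have hweak : ∀ i, ∀ ψ : Euc d → ℂ, IsTestFun univ ψ →
      ∫ x, C x * pd i ψ x = - ∫ x, C' i x * ψ x := by
    intro i ψ hψ
    rw [hC, hC', ind_mul_int hΩo, ind_mul_int hΩo]
    exact h.w i ψ hψ
  obtain ⟨δ1, hδ1, H1⟩ := approx_L2 x0 hCm he2
  choose δ2 hδ2 H2 using fun i => approx_L2 x0 (hCm' i) he2
  obtain ⟨δ, hδ0, hδa, hδb⟩ : ∃ δ : ℝ, 0 < δ ∧ δ < δ1 ∧ ∀ i, δ < δ2 i := by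
    have e1 : ∀ᶠ δ : ℝ in 𝓝[>] 0, δ < δ1 :=
      nhdsWithin_le_nhds (gt_mem_nhds hδ1)
    have e2 : ∀ᶠ δ : ℝ in 𝓝[>] 0, ∀ i, δ < δ2 i :=
      eventually_all.2 fun i => nhdsWithin_le_nhds (gt_mem_nhds (hδ2 i))
    obtain ⟨δ, ⟨h1, h2⟩, h3⟩ := ((e1.and e2).and self_mem_nhdsWithin).exists
    exact ⟨δ, h3, h1, h2⟩
  obtain ⟨s, hs1, hsδ, hsN⟩ : ∃ s : ℝ, 1 < s ∧ s < 1 + δ ∧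
      ∀ i, ENNReal.ofReal (s - 1) * eLpNorm (C' i) 2 volume ≤ e / 2 := by
    have e1 : ∀ᶠ s : ℝ in 𝓝[>] 1, s < 1 + δ :=
      nhdsWithin_le_nhds (gt_mem_nhds (by linarith))
    have e2 : ∀ᶠ s : ℝ in 𝓝[>] 1, ∀ i, ENNReal.ofReal (s - 1) * eLpNorm (C' i) 2 volume ≤ e / 2 := by
      refine eventually_all.2 fun i => ?_
      have h1 : Tendsto (fun s : ℝ => ENNReal.ofReal (s - 1)) (𝓝[>] 1) (𝓝 0) := by
        have := ((ENNReal.continuous_ofReal.comp (continuous_sub_right (1:ℝ))).tendsto 1).mono_left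
          (nhdsWithin_le_nhds (s := Ioi 1))
        simpa [Function.comp_def] using this
      have h2 : Tendsto (fun s : ℝ => ENNReal.ofReal (s - 1) * eLpNorm (C' i) 2 volume)
          (𝓝[>] 1) (𝓝 0) := by
        simpa using ENNReal.Tendsto.mul_const h1 (Or.inr (hCm' i).2.ne)
      exact (h2.eventually (gt_mem_nhds (pos_iff_ne_zero.2 he2))).mono fun _ h => h.le
    obtain ⟨s, ⟨h1, h2⟩, h3⟩ := ((e1.and e2).and self_mem_nhdsWithin).exists
    exact ⟨s, h3, h1, h2⟩
  have hs0 : (0:ℝ) < s := by linarith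
  -- compact set
  set K : Set (Euc d) := dil x0 s⁻¹ '' closure Ω with hK
  have hKc : IsCompact K :=
    (Metric.isCompact_of_isClosed_isBounded isClosed_closure hΩb.closure).image (dil_cont _ _)
  have hinv : ∀ x, dil x0 s⁻¹ (dil x0 s x) = x := by
    intro x
    simp [dil, smul_smul, hs0.ne']
  have hKΩ : K ⊆ Ω := by
    rintro _ ⟨y, hy, rfl⟩
    have := hΩc.closure_subset_image_homothety_interior_of_one_lt
      (by rwa [hΩo.interior_eq] : x0 ∈ interior Ω) s hs1 hy
    obtain ⟨z, hz, hzy⟩ := this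
    rw [hΩo.interior_eq] at hz
    have : y = dil x0 s z := by
      rw [← hzy, AffineMap.homothety_apply]; simp [dil, add_comm]
    rw [this, hinv]; exact hz
  obtain ⟨r, hr0, hr⟩ := hKc.exists_cthickening_subset_open hΩo hKΩ
  have hm : 0 < min δ r := lt_min hδ0 hr0
  let φ : ContDiffBump (0 : Euc d) := ⟨min δ r / 4, min δ r / 2, by positivity, by linarith⟩
  have hφδ : φ.rOut < δ := by
    have := min_le_left δ r; change min δ r / 2 < δ; linarith
  have hφr : φ.rOut < r := by
    have := min_le_right δ r; change min δ r / 2 < r; linarith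
  have hCl := memLp2_locInt (dil_memLp x0 hs1.le hCm).1
  refine ⟨moll φ (fun y => C (dil x0 s y)), ?_, ?_, ?_⟩
  · refine moll_test hKc hr hCl ?_ φ hφr
    intro x hx
    rw [hC]
    refine indicator_of_notMem ?_ _
    intro hxx
    exact hx ⟨dil x0 s x, subset_closure hxx, hinv x⟩
  · have h1 := H1 s hs1.le (by linarith) φ (by linarith)
    refine le_trans ?_ (h1.trans ENNReal.half_le_self)
    refine le_trans (le_of_eq ?_) (eLpNorm_mono_measure _ (Measure.restrict_le_self (s := Ω)))
    refine eLpNorm_congr_ae ?_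
    filter_upwards [ae_restrict_mem hΩo.measurableSet] with x hx
    simp [hC, hx]
  · intro i
    have h1 := H2 i s hs1.le (by linarith [hδb i]) φ (by linarith [hδb i])
    have hd : ∀ x, pd i (moll φ (fun y => C (dil x0 s y))) x
        = s * moll φ (fun y => C' i (dil x0 s y)) x := by
      intro x
      rw [moll_pd φ i hCl (dil_weak x0 hs0 i (hweak i)) x]
      exact moll_smul φ _ _ x
    have hmm : AEStronglyMeasurable (moll φ (fun y => C' i (dil x0 s y))) volume :=
      ((φ.hasCompactSupport_normed.continuous_convolution_left
        (ContinuousLinearMap.lsmul ℝ ℝ) φ.continuous_normed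
        (memLp2_locInt (dil_memLp x0 hs1.le (hCm' i)).1))).aestronglyMeasurable
    have h2 : eLpNorm (fun x => ((s - 1 : ℝ) : ℂ) * moll φ (fun y => C' i (dil x0 s y)) x) 2 volume
        ≤ e / 2 := by
      have : (fun x => ((s - 1 : ℝ) : ℂ) * moll φ (fun y => C' i (dil x0 s y)) x)
          = ((s - 1 : ℝ) : ℂ) • moll φ (fun y => C' i (dil x0 s y)) := rfl
      rw [this, eLpNorm_const_smul]
      refine le_trans ?_ (hsN i)
      have hsn : ‖((s - 1 : ℝ) : ℂ)‖ₑ = ENNReal.ofReal (s - 1) := by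
        rw [← ofReal_norm, Complex.norm_real, Real.norm_of_nonneg (by linarith)]
      rw [hsn]
      gcongr
      exact (moll_contr φ (dil_memLp x0 hs1.le (hCm' i)).1).trans (dil_memLp x0 hs1.le (hCm' i)).2
    calc eLpNorm (fun x => pd i (moll φ (fun y => C (dil x0 s y))) x - c' i x) 2 (volume.restrict Ω)
        = eLpNorm (fun x => (moll φ (fun y => C' i (dil x0 s y)) x - C' i x)
          + ((s - 1 : ℝ) : ℂ) * moll φ (fun y => C' i (dil x0 s y)) x) 2 (volume.restrict Ω) := by
          refine eLpNorm_congr_ae ?_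
          filter_upwards [ae_restrict_mem hΩo.measurableSet] with x hx
          rw [hd]
          simp only [hC', hx, indicator_of_mem]
          push_cast; ring
      _ ≤ eLpNorm (fun x => (moll φ (fun y => C' i (dil x0 s y)) x - C' i x)
          + ((s - 1 : ℝ) : ℂ) * moll φ (fun y => C' i (dil x0 s y)) x) 2 volume :=
          eLpNorm_mono_measure _ Measure.restrict_le_self
      _ ≤ e / 2 + e / 2 := by
          refine (eLpNorm_add_le (hmm.sub (hCm' i).1) (hmm.const_mul _) (by norm_num)).trans ?_
          exact add_le_add h1 h2
      _ = e := ENNReal.add_halves e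

/-- The standing assumptions on the domain. -/
structure Dom {d : ℕ} (Ω : Set (Euc d)) : Prop where
  o : IsOpen Ω
  b : Bornology.IsBounded Ω
  c : Convex ℝ Ω
  n : Ω.Nonempty

lemma H10f.seq {d : ℕ} {Ω : Set (Euc d)} (hΩ : Dom Ω) {c : Euc d → ℂ} {c' : Fin d → Euc d → ℂ}
    (h : H10f Ω c c') :
    ∃ φ : ℕ → Euc d → ℂ, (∀ n, IsTestFun Ω (φ n)) ∧
      Tendsto (fun n => eLpNorm (fun x => φ n x - c x) 2 (volume.restrict Ω)) atTop (𝓝 0) ∧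
      ∀ i, Tendsto (fun n => eLpNorm (fun x => pd i (φ n) x - c' i x) 2 (volume.restrict Ω))
        atTop (𝓝 0) := by
  obtain ⟨x0, hx0⟩ := hΩ.n
  have he : ∀ n : ℕ, ((n : ℝ≥0∞) + 1)⁻¹ ≠ 0 := by
    intro n; simp
  choose φ h1 h2 h3 using fun n : ℕ => h.dense hΩ.o hΩ.b hΩ.c hx0 (he n)
  have ht : Tendsto (fun n : ℕ => ((n : ℝ≥0∞) + 1)⁻¹) atTop (𝓝 0) := by
    have := (ENNReal.tendsto_inv_nat_nhds_zero).comp (tendsto_add_atTop_nat 1)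
    refine this.congr fun n => ?_
    simp
  exact ⟨φ, h1, tendsto_of_tendsto_of_tendsto_of_le_of_le tendsto_const_nhds ht
      (fun _ => zero_le) h2,
    fun i => tendsto_of_tendsto_of_tendsto_of_le_of_le tendsto_const_nhds ht
      (fun _ => zero_le) (fun n => h3 n i)⟩

lemma MemL2.mulInt {d : ℕ} {Ω : Set (Euc d)} {f g : Euc d → ℂ} (hf : MemL2 Ω f)
    (hg : MemL2 Ω g) : IntegrableOn (fun x => f x * g x) Ω volume :=
  MemLp.integrable_mul (p := 2) (q := 2) hf hg

lemma MemL2.conj {d : ℕ} {Ω : Set (Euc d)} {f : Euc d → ℂ} (hf : MemL2 Ω f) :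
    MemL2 Ω (fun x => (starRingEnd ℂ) (f x)) := by
  refine ⟨Complex.continuous_conj.comp_aestronglyMeasurable hf.1, ?_⟩
  refine lt_of_le_of_lt (le_of_eq ?_) hf.2
  refine eLpNorm_congr_norm_ae (Eventually.of_forall fun x => ?_)
  simp

lemma MemL2.sub' {d : ℕ} {Ω : Set (Euc d)} {f g : Euc d → ℂ} (hf : MemL2 Ω f) (hg : MemL2 Ω g) :
    MemL2 Ω (fun x => f x - g x) := MemLp.sub hf hg

lemma MemL2.add' {d : ℕ} {Ω : Set (Euc d)} {f g : Euc d → ℂ} (hf : MemL2 Ω f) (hg : MemL2 Ω g) :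
    MemL2 Ω (fun x => f x + g x) := MemLp.add hf hg

lemma MemL2.sum' {d : ℕ} {Ω : Set (Euc d)} {f : Fin d → Euc d → ℂ} (hf : ∀ i, MemL2 Ω (f i)) :
    MemL2 Ω (fun x => ∑ i, f i x) := memLp_finsetSum _ fun i _ => hf i

/-- multiplication by an essentially bounded function -/
lemma MemL2.bdd_mul' {d : ℕ} {Ω : Set (Euc d)} {f g : Euc d → ℂ} (hf : MemL2 Ω f)
    (hg : AEStronglyMeasurable g (volume.restrict Ω)) {C : ℝ}
    (hC : ∀ᵐ x ∂(volume.restrict Ω), ‖g x‖ ≤ C) : MemL2 Ω (fun x => g x * f x) := by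
  refine MemLp.of_le_mul (c := C) hf (hg.mul hf.1) ?_
  filter_upwards [hC] with x hx
  rw [norm_mul]; gcongr

lemma MemL2.contMul {d : ℕ} {Ω : Set (Euc d)} (hb : Bornology.IsBounded Ω) (ho : IsOpen Ω)
    {f g : Euc d → ℂ} (hf : MemL2 Ω f)
    (hg : Continuous g) : MemL2 Ω (fun x => g x * f x) := by
  obtain ⟨C, hC⟩ := (Metric.isCompact_of_isClosed_isBounded isClosed_closure
    hb.closure).exists_bound_of_continuousOn hg.continuousOn
  refine hf.bdd_mul' hg.aestronglyMeasurable (C := C) ?_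
  filter_upwards [ae_restrict_mem ho.measurableSet] with x hx
  exact hC x (subset_closure hx)

lemma IsTestFun.mem {d : ℕ} {Ω Ω' : Set (Euc d)} {φ : Euc d → ℂ}
    (hφ : IsTestFun Ω φ) : MemL2 Ω' φ :=
  (hφ.1.continuous.memLp_of_hasCompactSupport hφ.2.1).mono_measure Measure.restrict_le_self

lemma int_lim {d : ℕ} {Ω : Set (Euc d)} {f g : Euc d → ℂ} {gn : ℕ → Euc d → ℂ}
    (hf : MemL2 Ω f) (hg : MemL2 Ω g) (hgn : ∀ n, MemL2 Ω (gn n))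
    (h : Tendsto (fun n => eLpNorm (fun x => gn n x - g x) 2 (volume.restrict Ω)) atTop (𝓝 0)) :
    Tendsto (fun n => ∫ x in Ω, f x * gn n x) atTop (𝓝 (∫ x in Ω, f x * g x)) := by
  refine tendsto_integral_of_L1 _ (hf.mulInt hg).aestronglyMeasurable
    (Eventually.of_forall fun n => hf.mulInt (hgn n)) ?_
  have h1 : Tendsto (fun n => eLpNorm f 2 (volume.restrict Ω) *
      eLpNorm (fun x => gn n x - g x) 2 (volume.restrict Ω)) atTop (𝓝 0) := by
    simpa using ENNReal.Tendsto.const_mul h (Or.inr hf.2.ne)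
  refine tendsto_of_tendsto_of_tendsto_of_le_of_le tendsto_const_nhds h1
    (fun _ => zero_le) (fun n => ?_)
  have := eLpNorm_smul_le_mul_eLpNorm (p := 2) (q := 2) (r := 1)
    ((hgn n).1.sub hg.1) hf.1
  rw [eLpNorm_one_eq_lintegral_enorm] at this
  refine le_trans (le_of_eq ?_) this
  refine lintegral_congr fun x => ?_
  simp [mul_sub]

lemma H10f.ibp {d : ℕ} {Ω : Set (Euc d)} (hΩ : Dom Ω) {c : Euc d → ℂ} {c' : Fin d → Euc d → ℂ}
    (h : H10f Ω c c') {a a' : Euc d → ℂ} (ha : MemL2 Ω a) (ha' : MemL2 Ω a') {i : Fin d}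
    (hw : IsWeakDeriv Ω i a a') :
    ∫ x in Ω, a x * c' i x = - ∫ x in Ω, a' x * c x := by
  obtain ⟨φ, h1, h2, h3⟩ := h.seq hΩ
  have e1 := int_lim ha (h.m' i) (fun n => ((h1 n).pd i).mem) (h3 i)
  have e2 := (int_lim ha' h.m (fun n => (h1 n).mem) h2).neg
  refine tendsto_nhds_unique e1 (e2.congr fun n => ?_)
  exact (hw (φ n) (h1 n)).symm

lemma pd_comm' {d : ℕ} {φ : Euc d → ℂ} (h : ContDiff ℝ (⊤ : ℕ∞) φ) (i j : Fin d) (x : Euc d) :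
    pd i (pd j φ) x = pd j (pd i φ) x := by
  have hs : IsSymmSndFDerivAt ℝ φ x :=
    (h.contDiffAt).isSymmSndFDerivAt (by
      simp only [minSmoothness_of_isRCLikeNormedField]; exact WithTop.coe_le_coe.2 (le_top : (2:ℕ∞) ≤ ⊤))
  have hd : DifferentiableAt ℝ (fderiv ℝ φ) x :=
    (h.fderiv_right (m := (⊤ : ℕ∞)) (by simp)).differentiable (by simp) x
  have key : ∀ v w : Euc d, fderiv ℝ (fun y => fderiv ℝ φ y v) x w = fderiv ℝ (fderiv ℝ φ) x w v := by
    intro v w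
    have := (hd.hasFDerivAt.clm_apply (hasFDerivAt_const v x)).fderiv
    rw [this]; simp
  unfold pd
  rw [key, key]
  exact hs _ _

lemma H10f.curl {d : ℕ} {Ω : Set (Euc d)} (hΩ : Dom Ω) {c : Euc d → ℂ} {c' : Fin d → Euc d → ℂ}
    (h : H10f Ω c c') {b : Euc d → ℂ} {b' : Fin d → Euc d → ℂ} (hb : H1f Ω b b') (i j : Fin d) :
    ∫ x in Ω, b' j x * c' i x = ∫ x in Ω, b' i x * c' j x := by
  obtain ⟨φ, h1, h2, h3⟩ := h.seq hΩ
  have e1 := int_lim (hb.m' j) (h.m' i) (fun n => ((h1 n).pd i).mem) (h3 i)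
  have e2 := int_lim (hb.m' i) (h.m' j) (fun n => ((h1 n).pd j).mem) (h3 j)
  refine tendsto_nhds_unique e1 (e2.congr fun n => ?_)
  have f1 := hb.w j _ ((h1 n).pd i)
  have f2 := hb.w i _ ((h1 n).pd j)
  have f3 : ∀ x, pd i (pd j (φ n)) x = pd j (pd i (φ n)) x := pd_comm' (h1 n).1 i j
  simp only [f3] at f2
  rw [f1] at f2
  exact (neg_injective f2).symm

lemma L2N_sq {d : ℕ} {Ω : Set (Euc d)} {u : Euc d → ℂ} (hu : MemL2 Ω u) :
    (L2N Ω u)^2 = ∫ x in Ω, ‖u x‖^2 := by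
  unfold L2N
  rw [toReal_eLpNorm hu.1]
  rw [lpNorm_eq_integral_norm_rpow_toReal (by norm_num) (by norm_num) hu.1]
  simp only [ENNReal.toReal_ofNat, Real.rpow_ofNat]
  rw [← Real.rpow_natCast, ← Real.rpow_mul]
  · norm_num
  · exact integral_nonneg fun x => by positivity

lemma L2N_nonneg {d : ℕ} (Ω : Set (Euc d)) (u : Euc d → ℂ) : 0 ≤ L2N Ω u := ENNReal.toReal_nonneg

lemma L2N_tendsto {d : ℕ} {Ω : Set (Euc d)} {g : Euc d → ℂ} {gn : ℕ → Euc d → ℂ}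
    (hg : MemL2 Ω g) (hgn : ∀ n, MemL2 Ω (gn n))
    (h : Tendsto (fun n => eLpNorm (fun x => gn n x - g x) 2 (volume.restrict Ω)) atTop (𝓝 0)) :
    Tendsto (fun n => L2N Ω (gn n)) atTop (𝓝 (L2N Ω g)) := by
  have h1 : Tendsto (fun n => (hgn n).toLp) atTop (𝓝 hg.toLp) :=
    (Lp.tendsto_Lp_iff_tendsto_eLpNorm'' gn hgn g hg).2 h
  have h2 := h1.norm
  have e0 : ‖hg.toLp‖ = L2N Ω g := Lp.norm_toLp _ _
  rw [e0] at h2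
  exact h2.congr fun n => Lp.norm_toLp _ _

lemma opnorm_sq {d : ℕ} (T : Euc d →L[ℝ] ℂ) :
    ‖T‖^2 ≤ ∑ i, ‖T (EuclideanSpace.single i (1:ℝ))‖^2 := by
  have h : ‖T‖ ≤ Real.sqrt (∑ i, ‖T (EuclideanSpace.single i (1:ℝ))‖^2) := by
    refine ContinuousLinearMap.opNorm_le_bound _ (Real.sqrt_nonneg _) fun v => ?_
    have hv : v = ∑ i, v i • EuclideanSpace.single i (1:ℝ) := by
      have := (EuclideanSpace.basisFun (Fin d) ℝ).sum_repr v
      simpa using this.symm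
    have h1 : ‖T v‖ ≤ ∑ i, ‖T (EuclideanSpace.single i (1:ℝ))‖ * ‖v i‖ := by
      conv_lhs => rw [hv]
      rw [map_sum]
      refine (norm_sum_le _ _).trans (Finset.sum_le_sum fun i _ => ?_)
      rw [map_smul, norm_smul, mul_comm]
    refine h1.trans ((Real.sum_mul_le_sqrt_mul_sqrt _ _ _).trans ?_)
    rw [EuclideanSpace.norm_eq]
  calc ‖T‖^2 ≤ (Real.sqrt (∑ i, ‖T (EuclideanSpace.single i (1:ℝ))‖^2))^2 := by gcongr
    _ = _ := Real.sq_sqrt (by positivity)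

lemma test_zero_off {d : ℕ} {Ω : Set (Euc d)} {φ : Euc d → ℂ} (h : IsTestFun Ω φ) {x : Euc d}
    (hx : x ∉ Ω) : φ x = 0 := by
  by_contra hne
  exact hx (h.2.2 (subset_tsupport _ hne))

lemma test_sq_int {d : ℕ} {Ω : Set (Euc d)} {φ : Euc d → ℂ} (h : IsTestFun Ω φ) :
    ∫ x in Ω, ‖φ x‖^2 = ∫ x, ‖φ x‖^2 := by
  refine setIntegral_eq_integral_of_forall_compl_eq_zero fun x hx => ?_
  simp [test_zero_off h hx]

lemma poincare_test {d : ℕ} {Ω : Set (Euc d)} {φ : Euc d → ℂ} (h : IsTestFun Ω φ) :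
    lambda1 Ω * (L2N Ω φ)^2 ≤ ∑ i, (L2N Ω (pd i φ))^2 := by
  rw [L2N_sq h.mem, test_sq_int h]
  have hs : ∀ i, (L2N Ω (pd i φ))^2 = ∫ x, ‖pd i φ x‖^2 := fun i => by
    rw [L2N_sq ((h.pd i).mem), test_sq_int (h.pd i)]
  simp only [hs]
  have hint : ∀ i, Integrable (fun x => ‖pd i φ x‖^2) volume := by
    intro i
    have hc : Continuous (fun x => ‖pd i φ x‖^2) := (h.pd i).1.continuous.norm.pow 2
    exact hc.integrable_of_hasCompactSupport
      (HasCompactSupport.comp_left (g := fun z : ℂ => ‖z‖^2) (h.pd i).2.1 (by simp))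
  rw [← integral_finsetSum Finset.univ (fun i _ => hint i)]
  have h1 : ∫ x, ‖fderiv ℝ φ x‖^2 ≤ ∫ x, ∑ i, ‖pd i φ x‖^2 := by
    refine integral_mono_of_nonneg (Eventually.of_forall fun x => by positivity)
      (integrable_finsetSum Finset.univ (fun i _ => hint i)) (Eventually.of_forall fun x => ?_)
    exact opnorm_sq _
  refine le_trans ?_ h1
  by_cases hz : ∫ x, ‖φ x‖^2 = 0
  · rw [hz, mul_zero]; exact integral_nonneg fun x => by positivity
  have hpos : 0 < ∫ x, ‖φ x‖^2 :=
    lt_of_le_of_ne (integral_nonneg fun x => by positivity) (Ne.symm hz)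
  rw [← le_div_iff₀ hpos]
  refine csInf_le ⟨0, ?_⟩ ⟨φ, h, ?_, rfl⟩
  · rintro r ⟨ψ, -, -, rfl⟩
    exact div_nonneg (integral_nonneg fun x => by positivity) (integral_nonneg fun x => by positivity)
  · rintro rfl
    simp at hz

lemma H10f.poincare {d : ℕ} {Ω : Set (Euc d)} (hΩ : Dom Ω) {c : Euc d → ℂ}
    {c' : Fin d → Euc d → ℂ} (h : H10f Ω c c') :
    lambda1 Ω * (L2N Ω c)^2 ≤ ∑ i, (L2N Ω (c' i))^2 := by
  obtain ⟨φ, h1, h2, h3⟩ := h.seq hΩ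
  have e1 := ((L2N_tendsto h.m (fun n => (h1 n).mem) h2).pow 2).const_mul (lambda1 Ω)
  have e2 := tendsto_finsetSum (Finset.univ) fun i (_ : i ∈ Finset.univ) =>
    (L2N_tendsto (h.m' i) (fun n => ((h1 n).pd i).mem) (h3 i)).pow 2
  exact le_of_tendsto_of_tendsto' e1 e2 fun n => poincare_test (h1 n)

/-- smooth convex function vanishing on `(-∞,1]`, with slope in `[0,1]` -/
def chi (t : ℝ) : ℝ := ∫ s in (0:ℝ)..t, Real.smoothTransition (s - 1)

lemma st_cont : Continuous (fun s : ℝ => Real.smoothTransition (s - 1)) :=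
  Real.smoothTransition.continuous.comp (continuous_id.sub continuous_const)

lemma chi_deriv (t : ℝ) : HasDerivAt chi (Real.smoothTransition (t - 1)) t :=
  intervalIntegral.integral_hasDerivAt_right (st_cont.intervalIntegrable _ _)
    (st_cont.stronglyMeasurableAtFilter _ _) st_cont.continuousAt

lemma chi_deriv' : deriv chi = fun t => Real.smoothTransition (t - 1) :=
  funext fun t => (chi_deriv t).deriv

lemma chi_smooth : ContDiff ℝ (⊤ : ℕ∞) chi := by
  rw [contDiff_infty_iff_deriv]
  refine ⟨fun t => (chi_deriv t).differentiableAt, ?_⟩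
  rw [chi_deriv']
  exact Real.smoothTransition.contDiff.comp (contDiff_id.sub contDiff_const)

lemma chi_zero {t : ℝ} (ht : t ≤ 1) : chi t = 0 := by
  unfold chi
  have : ∀ s ∈ uIcc 0 t, Real.smoothTransition (s - 1) = 0 := by
    intro s hs
    apply Real.smoothTransition.zero_of_nonpos
    rcases Set.mem_uIcc.1 hs with h | h <;> linarith [h.1, h.2]
  rw [intervalIntegral.integral_congr this]; simp

lemma chi_mono : Monotone chi := by
  apply monotone_of_deriv_nonneg (fun t => (chi_deriv t).differentiableAt)
  intro t
  rw [chi_deriv']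
  exact Real.smoothTransition.nonneg _

lemma chi_nonneg (t : ℝ) : 0 ≤ chi t := by
  rcases le_total t 1 with h | h
  · rw [chi_zero h]
  · rw [← chi_zero (le_refl (1:ℝ))]; exact chi_mono h

lemma st_mono : Monotone (fun t : ℝ => Real.smoothTransition (t - 1)) := by
  intro a b h
  exact Real.smoothTransition.monotone (by linarith)

lemma chi_convex : ConvexOn ℝ univ chi := by
  apply Monotone.convexOn_univ_of_deriv (fun t => (chi_deriv t).differentiableAt)
  rw [chi_deriv']
  exact st_mono

lemma chi_le {t : ℝ} (ht : 0 ≤ t) : chi t ≤ t := by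
  have : Monotone (fun t => t - chi t) := by
    apply monotone_of_deriv_nonneg (fun t => (differentiableAt_id.sub (chi_deriv t).differentiableAt))
    intro t
    have := ((hasDerivAt_id t).sub (chi_deriv t)).deriv
    rw [this]
    linarith [Real.smoothTransition.le_one (t-1)]
  have h := this ht
  simp only [chi_zero (zero_le_one)] at h
  linarith

lemma chi_ge (t : ℝ) : t - 2 ≤ chi t := by
  rcases le_total t 2 with h | h
  · linarith [chi_nonneg t]
  · have e : chi t = chi 2 + ∫ s in (2:ℝ)..t, Real.smoothTransition (s - 1) := by
      unfold chi
      rw [intervalIntegral.integral_add_adjacent_intervals] <;> exact st_cont.intervalIntegrable _ _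
    have : ∀ s ∈ uIcc 2 t, Real.smoothTransition (s - 1) = 1 := by
      intro s hs
      apply Real.smoothTransition.one_of_one_le
      rcases Set.mem_uIcc.1 hs with h | h <;> linarith [h.1, h.2]
    rw [intervalIntegral.integral_congr this] at e
    simp at e
    linarith [chi_nonneg 2]

lemma pd_mul {d : ℕ} {f g : Euc d → ℂ} {x : Euc d} (hf : DifferentiableAt ℝ f x)
    (hg : DifferentiableAt ℝ g x) (i : Fin d) :
    pd i (fun y => f y * g y) x = pd i f x * g x + f x * pd i g x := by
  unfold pd
  rw [fderiv_fun_mul hf hg]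
  simp
  ring

lemma IsTestFun.mul {d : ℕ} {Ω : Set (Euc d)} {e φ : Euc d → ℂ} (he : ContDiff ℝ (⊤ : ℕ∞) e)
    (hφ : IsTestFun Ω φ) : IsTestFun Ω (fun x => e x * φ x) :=
  ⟨he.mul hφ.1, hφ.2.1.mul_left, (tsupport_mul_subset_right).trans hφ.2.2⟩

lemma pd_smooth {d : ℕ} {e : Euc d → ℂ} (he : ContDiff ℝ (⊤ : ℕ∞) e) (i : Fin d) :
    ContDiff ℝ (⊤ : ℕ∞) (pd i e) :=
  (he.fderiv_right (m := (⊤ : ℕ∞)) (by simp)).clm_apply contDiff_const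

lemma sm_diff {d : ℕ} {e : Euc d → ℂ} (he : ContDiff ℝ (⊤ : ℕ∞) e) (x : Euc d) :
    DifferentiableAt ℝ e x := he.differentiable (by simp) x

/-- weak derivative on `Ω` with tests supported in `Ω'` -/
def WD {d : ℕ} (Ω Ω' : Set (Euc d)) (i : Fin d) (a a' : Euc d → ℂ) : Prop :=
  ∀ φ : Euc d → ℂ, IsTestFun Ω' φ → ∫ x in Ω, a x * pd i φ x = - ∫ x in Ω, a' x * φ x

lemma WD.smul {d : ℕ} {Ω Ω' : Set (Euc d)} (hb : Bornology.IsBounded Ω) (ho : IsOpen Ω)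
    {i : Fin d} {a a' e : Euc d → ℂ} (h : WD Ω Ω' i a a') (ha : MemL2 Ω a) (ha' : MemL2 Ω a')
    (he : ContDiff ℝ (⊤ : ℕ∞) e) :
    WD Ω Ω' i (fun x => e x * a x) (fun x => pd i e x * a x + e x * a' x) := by
  intro φ hφ
  have h1 := h _ (hφ.mul he)
  have h2 : ∀ x, a x * pd i (fun y => e y * φ y) x
      = (pd i e x * a x) * φ x + (e x * a x) * pd i φ x := by
    intro x; rw [pd_mul (sm_diff he x) (sm_diff hφ.1 x)]; ring
  simp only [h2] at h1
  have m1 : MemL2 Ω (fun x => pd i e x * a x) := ha.contMul hb ho (pd_smooth he i).continuous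
  have m2 : MemL2 Ω (fun x => e x * a x) := ha.contMul hb ho he.continuous
  have m3 : MemL2 Ω (fun x => e x * a' x) := ha'.contMul hb ho he.continuous
  rw [integral_add (m1.mulInt hφ.mem) (m2.mulInt (hφ.pd i).mem)] at h1
  have h3 : ∀ x, (pd i e x * a x + e x * a' x) * φ x
      = (pd i e x * a x) * φ x + (e x * a' x) * φ x := fun x => by ring
  simp only [h3]
  rw [integral_add (m1.mulInt hφ.mem) (m3.mulInt hφ.mem)]
  have h4 : ∀ x, a' x * (e x * φ x) = (e x * a' x) * φ x := fun x => by ring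
  simp only [h4] at h1
  rw [neg_add, ← h1]; ring

lemma H1f.smul {d : ℕ} {Ω : Set (Euc d)} (hΩ : Dom Ω) {a e : Euc d → ℂ} {a' : Fin d → Euc d → ℂ}
    (h : H1f Ω a a') (he : ContDiff ℝ (⊤ : ℕ∞) e) :
    H1f Ω (fun x => e x * a x) (fun i x => pd i e x * a x + e x * a' i x) :=
  ⟨h.m.contMul hΩ.b hΩ.o he.continuous,
   fun i => (h.m.contMul hΩ.b hΩ.o (pd_smooth he i).continuous).add'
     ((h.m' i).contMul hΩ.b hΩ.o he.continuous),
   fun i => WD.smul hΩ.b hΩ.o (h.w i) h.m (h.m' i) he⟩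

lemma H10f.smul {d : ℕ} {Ω : Set (Euc d)} (hΩ : Dom Ω) {a e : Euc d → ℂ} {a' : Fin d → Euc d → ℂ}
    (h : H10f Ω a a') (he : ContDiff ℝ (⊤ : ℕ∞) e) :
    H10f Ω (fun x => e x * a x) (fun i x => pd i e x * a x + e x * a' i x) :=
  ⟨h.m.contMul hΩ.b hΩ.o he.continuous,
   fun i => (h.m.contMul hΩ.b hΩ.o (pd_smooth he i).continuous).add'
     ((h.m' i).contMul hΩ.b hΩ.o he.continuous),
   fun i => WD.smul (Ω' := univ) hΩ.b hΩ.o (h.w i) h.m (h.m' i) he⟩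

lemma conj_smooth {d : ℕ} {φ : Euc d → ℂ} (h : ContDiff ℝ (⊤ : ℕ∞) φ) :
    ContDiff ℝ (⊤ : ℕ∞) (fun x => (starRingEnd ℂ) (φ x)) :=
  Complex.conjCLE.contDiff.comp h

lemma pd_conj {d : ℕ} {φ : Euc d → ℂ} {x : Euc d} (h : DifferentiableAt ℝ φ x) (i : Fin d) :
    pd i (fun x => (starRingEnd ℂ) (φ x)) x = (starRingEnd ℂ) (pd i φ x) := by
  unfold pd
  have := (Complex.conjCLE.toContinuousLinearMap.hasFDerivAt.comp x h.hasFDerivAt).fderiv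
  have h2 : fderiv ℝ (fun x => (starRingEnd ℂ) (φ x)) x = _ := this
  rw [h2]; simp

lemma IsTestFun.conj {d : ℕ} {Ω : Set (Euc d)} {φ : Euc d → ℂ}
    (hφ : IsTestFun Ω φ) : IsTestFun Ω (fun x => (starRingEnd ℂ) (φ x)) := by
  refine ⟨conj_smooth hφ.1, hφ.2.1.comp_left (g := starRingEnd ℂ) (by simp), ?_⟩
  exact (tsupport_comp_subset (g := starRingEnd ℂ) (by simp) φ).trans hφ.2.2

lemma WD.conj {d : ℕ} {Ω Ω' : Set (Euc d)} {i : Fin d} {a a' : Euc d → ℂ} (h : WD Ω Ω' i a a') :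
    WD Ω Ω' i (fun x => (starRingEnd ℂ) (a x)) (fun x => (starRingEnd ℂ) (a' x)) := by
  intro φ hφ
  have h1 := congrArg (starRingEnd ℂ) (h _ hφ.conj)
  rw [map_neg, ← integral_conj, ← integral_conj] at h1
  simpa [pd_conj (sm_diff hφ.1 _)] using h1

lemma H1f.conj {d : ℕ} {Ω : Set (Euc d)} {a : Euc d → ℂ} {a' : Fin d → Euc d → ℂ}
    (h : H1f Ω a a') : H1f Ω (fun x => (starRingEnd ℂ) (a x)) (fun i x => (starRingEnd ℂ) (a' i x)) :=
  ⟨h.m.conj, fun i => (h.m' i).conj, fun i => WD.conj (h.w i)⟩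

lemma H10f.conj {d : ℕ} {Ω : Set (Euc d)} {a : Euc d → ℂ} {a' : Fin d → Euc d → ℂ}
    (h : H10f Ω a a') : H10f Ω (fun x => (starRingEnd ℂ) (a x)) (fun i x => (starRingEnd ℂ) (a' i x)) :=
  ⟨h.m.conj, fun i => (h.m' i).conj, fun i => WD.conj (Ω' := univ) (h.w i)⟩

/-- scaled cut-off -/
def Gn (n : ℕ) (s : ℝ) : ℝ := chi ((n + 1 : ℝ) * s) / (n + 1)

lemma Gn_deriv (n : ℕ) (s : ℝ) :
    HasDerivAt (Gn n) (Real.smoothTransition ((n + 1 : ℝ) * s - 1)) s := by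
  have hn : (n + 1 : ℝ) ≠ 0 := by positivity
  have h1 : HasDerivAt (fun s : ℝ => (n + 1 : ℝ) * s) (n + 1 : ℝ) s := by
    simpa using (hasDerivAt_id s).const_mul (n + 1 : ℝ)
  have h2 := ((chi_deriv ((n + 1 : ℝ) * s)).comp s h1).div_const (n + 1 : ℝ)
  rw [mul_div_assoc, div_self hn, mul_one] at h2
  exact h2

lemma Gn_smooth (n : ℕ) : ContDiff ℝ (⊤ : ℕ∞) (Gn n) :=
  (chi_smooth.comp (contDiff_const.mul contDiff_id)).div_const _

lemma Gn_zero (n : ℕ) {s : ℝ} (hs : (n + 1 : ℝ) * s ≤ 1) : Gn n s = 0 := by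
  simp [Gn, chi_zero hs]

lemma Gn_bd (n : ℕ) {s : ℝ} (hs : 0 ≤ s) : 0 ≤ Gn n s ∧ Gn n s ≤ s ∧ s - 2 / (n + 1 : ℝ) ≤ Gn n s := by
  have hn : (0:ℝ) < (n + 1 : ℝ) := by positivity
  refine ⟨div_nonneg (chi_nonneg _) hn.le, ?_, ?_⟩
  · rw [Gn, div_le_iff₀ hn, mul_comm s]
    exact chi_le (by positivity)
  · rw [Gn, le_div_iff₀ hn]
    have := chi_ge ((n + 1 : ℝ) * s)
    have e : (s - 2 / (n + 1 : ℝ)) * (n + 1) = (n + 1) * s - 2 := by field_simp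
    rw [e]; exact this

lemma tdn : Tendsto (fun n : ℕ => 2 / (n + 1 : ℝ)) atTop (𝓝 0) := by
  have := (tendsto_one_div_add_atTop_nhds_zero_nat (𝕜 := ℝ)).const_mul 2
  simpa [div_eq_mul_inv] using this

lemma Gn_lim {s : ℝ} (hs : 0 ≤ s) : Tendsto (fun n => Gn n s) atTop (𝓝 s) := by
  have h1 : Tendsto (fun n : ℕ => s - 2 / (n + 1 : ℝ)) atTop (𝓝 s) := by
    simpa using tdn.const_sub s
  exact tendsto_of_tendsto_of_tendsto_of_le_of_le h1 tendsto_const_nhds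
    (fun n => (Gn_bd n hs).2.2) (fun n => (Gn_bd n hs).2.1)

lemma Gn'_lim {s : ℝ} (hs : 0 < s) :
    Tendsto (fun n : ℕ => Real.smoothTransition ((n + 1 : ℝ) * s - 1)) atTop (𝓝 1) := by
  refine tendsto_const_nhds.congr' ?_
  obtain ⟨N, hN⟩ := exists_nat_gt (2 / s)
  filter_upwards [eventually_ge_atTop N] with n hn
  rw [Real.smoothTransition.one_of_one_le]
  have : (N:ℝ) ≤ n := by exact_mod_cast hn
  rw [div_lt_iff₀ hs] at hN
  nlinarith

/-- coercion of a real function -/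
def cx {d : ℕ} (η : Euc d → ℝ) : Euc d → ℂ := fun x => (η x : ℂ)

lemma cx_smooth {d : ℕ} {η : Euc d → ℝ} (h : ContDiff ℝ (⊤ : ℕ∞) η) :
    ContDiff ℝ (⊤ : ℕ∞) (cx η) := Complex.ofRealCLM.contDiff.comp h

lemma pd_cx {d : ℕ} {η : Euc d → ℝ} {x : Euc d} (h : DifferentiableAt ℝ η x) (i : Fin d) :
    pd i (cx η) x = (fderiv ℝ η x (EuclideanSpace.single i (1:ℝ)) : ℂ) := by
  unfold pd
  have h2 : fderiv ℝ (cx η) x = _ := (Complex.ofRealCLM.hasFDerivAt.comp x h.hasFDerivAt).fderiv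
  rw [h2]; simp

lemma pd_Gn {d : ℕ} {η : Euc d → ℝ} {x : Euc d} (h : DifferentiableAt ℝ η x) (i : Fin d) (n : ℕ) :
    pd i (cx (fun y => Gn n (η y))) x
      = (Real.smoothTransition ((n + 1 : ℝ) * η x - 1) : ℂ) * pd i (cx η) x := by
  have h1 := (Gn_deriv n (η x)).comp_hasFDerivAt x h.hasFDerivAt
  have h1' : HasFDerivAt (fun y => Gn n (η y)) _ x := h1
  rw [pd_cx h, pd_cx h1'.differentiableAt, h1'.fderiv]
  simp

lemma dom_lim {d : ℕ} {Ω : Set (Euc d)} {F : ℕ → Euc d → ℂ} {f g : Euc d → ℂ}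
    (ho : IsOpen Ω) (hF : ∀ n, Integrable (F n) (volume.restrict Ω))
    (hg : Integrable g (volume.restrict Ω)) (hb : ∀ n, ∀ x ∈ Ω, ‖F n x‖ ≤ ‖g x‖)
    (hl : ∀ x ∈ Ω, Tendsto (fun n => F n x) atTop (𝓝 (f x))) :
    Tendsto (fun n => ∫ x in Ω, F n x) atTop (𝓝 (∫ x in Ω, f x)) := by
  refine tendsto_integral_of_dominated_convergence (fun x => ‖g x‖)
    (fun n => (hF n).aestronglyMeasurable) hg.norm (fun n => ?_) ?_
  · filter_upwards [ae_restrict_mem ho.measurableSet] with x hx using hb n x hx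
  · filter_upwards [ae_restrict_mem ho.measurableSet] with x hx using hl x hx

lemma Gn_test {d : ℕ} {Ω : Set (Euc d)} {η : Euc d → ℝ} (hη : ContDiff ℝ (⊤ : ℕ∞) η)
    (hηΩ : Ω = {x | 0 < η x}) {φ : Euc d → ℂ} (hφ : IsTestFun univ φ) (n : ℕ) :
    IsTestFun Ω (fun x => cx (fun y => Gn n (η y)) x * φ x) := by
  refine ⟨(cx_smooth ((Gn_smooth n).comp hη)).mul hφ.1, hφ.2.1.mul_left, ?_⟩
  have hn : (0:ℝ) < (n + 1 : ℝ) := by positivity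
  have hc : IsClosed {x | 1 ≤ (n + 1 : ℝ) * η x} :=
    isClosed_le continuous_const (continuous_const.mul hη.continuous)
  refine (closure_minimal (fun x hx => ?_) hc).trans (fun x hx => ?_)
  · by_contra h
    apply hx
    simp only [mem_ofPred_eq, not_le] at h
    simp [cx, Gn_zero n h.le]
  · rw [hηΩ]
    simp only [mem_ofPred_eq] at hx ⊢
    by_contra h
    nlinarith

/-- (E): multiplication by a defining function maps `H¹` to `H¹₀`. -/
lemma H1f.eta {d : ℕ} {Ω : Set (Euc d)} (hΩ : Dom Ω) {a : Euc d → ℂ} {a' : Fin d → Euc d → ℂ}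
    (h : H1f Ω a a') {η : Euc d → ℝ} (hη : ContDiff ℝ (⊤ : ℕ∞) η) (hηΩ : Ω = {x | 0 < η x}) :
    H10f Ω (fun x => cx η x * a x) (fun i x => pd i (cx η) x * a x + cx η x * a' i x) := by
  have he := cx_smooth hη
  have hs := h.smul hΩ he
  refine ⟨hs.m, hs.m', fun i φ hφ => ?_⟩
  have hpos : ∀ x ∈ Ω, 0 < η x := fun x hx => by rw [hηΩ] at hx; exact hx
  have hst : ∀ (n : ℕ) (x), ‖(Real.smoothTransition ((n + 1 : ℝ) * η x - 1) : ℂ)‖ ≤ 1 := by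
    intro n x
    rw [Complex.norm_real, Real.norm_of_nonneg (Real.smoothTransition.nonneg _)]
    exact Real.smoothTransition.le_one _
  have hstc : ∀ n : ℕ, Continuous (fun x => (Real.smoothTransition ((n + 1 : ℝ) * η x - 1) : ℂ)) := by
    intro n
    exact Complex.continuous_ofReal.comp (Real.smoothTransition.continuous.comp
      ((continuous_const.mul hη.continuous).sub continuous_const))
  have hGc : ∀ n : ℕ, Continuous (cx (fun y => Gn n (η y))) :=
    fun n => (cx_smooth ((Gn_smooth n).comp hη)).continuous
  have hG : ∀ (n : ℕ), ∀ x ∈ Ω, ‖cx (fun y => Gn n (η y)) x‖ ≤ ‖cx η x‖ := by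
    intro n x hx
    have := Gn_bd n (hpos x hx).le
    simp only [cx, Complex.norm_real]
    rw [Real.norm_of_nonneg this.1, Real.norm_of_nonneg (hpos x hx).le]
    exact this.2.1
  have hGl : ∀ x ∈ Ω, Tendsto (fun n => cx (fun y => Gn n (η y)) x) atTop (𝓝 (cx η x)) := by
    intro x hx
    exact (Complex.continuous_ofReal.tendsto _).comp (Gn_lim (hpos x hx).le)
  have m1 : MemL2 Ω (fun x => pd i (cx η) x * a x) :=
    h.m.contMul hΩ.b hΩ.o (pd_smooth he i).continuous
  have m2 := hs.m
  have m3 : MemL2 Ω (fun x => cx η x * a' i x) := (h.m' i).contMul hΩ.b hΩ.o he.continuous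
  -- three limits
  have l1 : Tendsto (fun n : ℕ => ∫ x in Ω, ((Real.smoothTransition ((n + 1 : ℝ) * η x - 1) : ℂ) *
      (pd i (cx η) x * a x)) * φ x) atTop (𝓝 (∫ x in Ω, (pd i (cx η) x * a x) * φ x)) := by
    refine dom_lim hΩ.o (fun n => (m1.contMul hΩ.b hΩ.o (hstc n)).mulInt hφ.mem)
      (m1.mulInt hφ.mem) (fun n x hx => ?_) (fun x hx => ?_)
    · rw [mul_assoc, norm_mul]
      exact mul_le_of_le_one_left (norm_nonneg _) (hst n x)
    · have := (Complex.continuous_ofReal.tendsto _).comp (Gn'_lim (hpos x hx))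
      have h2 := (this.mul_const (pd i (cx η) x * a x)).mul_const (φ x)
      simpa using h2
  have l2 : Tendsto (fun n : ℕ => ∫ x in Ω, (cx (fun y => Gn n (η y)) x * a x) * pd i φ x) atTop
      (𝓝 (∫ x in Ω, (cx η x * a x) * pd i φ x)) := by
    refine dom_lim hΩ.o (fun n => (h.m.contMul hΩ.b hΩ.o (hGc n)).mulInt (hφ.pd i).mem)
      (m2.mulInt (hφ.pd i).mem) (fun n x hx => ?_) (fun x hx => ?_)
    · simp only [norm_mul]
      gcongr
      exact hG n x hx
    · exact ((hGl x hx).mul_const _).mul_const _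
  have l3 : Tendsto (fun n : ℕ => ∫ x in Ω, (cx (fun y => Gn n (η y)) x * a' i x) * φ x) atTop
      (𝓝 (∫ x in Ω, (cx η x * a' i x) * φ x)) := by
    refine dom_lim hΩ.o (fun n => ((h.m' i).contMul hΩ.b hΩ.o (hGc n)).mulInt hφ.mem)
      (m3.mulInt hφ.mem) (fun n x hx => ?_) (fun x hx => ?_)
    · simp only [norm_mul]
      gcongr
      exact hG n x hx
    · exact ((hGl x hx).mul_const _).mul_const _
  have key := tendsto_nhds_unique (l1.add l2) (l3.neg.congr fun n => ?_)
  · have h3 : ∀ x, (pd i (cx η) x * a x + cx η x * a' i x) * φ x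
        = (pd i (cx η) x * a x) * φ x + (cx η x * a' i x) * φ x := fun x => by ring
    simp only [h3]
    rw [integral_add (m1.mulInt hφ.mem) (m3.mulInt hφ.mem), neg_add, ← key]; ring
  · have h1 := h.w i _ (Gn_test hη hηΩ hφ n)
    have h2 : ∀ x, a x * pd i (fun x => cx (fun y => Gn n (η y)) x * φ x) x
        = ((Real.smoothTransition ((n + 1 : ℝ) * η x - 1) : ℂ) * (pd i (cx η) x * a x)) * φ x
          + (cx (fun y => Gn n (η y)) x * a x) * pd i φ x := by
      intro x
      rw [pd_mul (f := cx (fun y => Gn n (η y))) (sm_diff (cx_smooth ((Gn_smooth n).comp hη)) x)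
        (sm_diff hφ.1 x),
        pd_Gn (hη.differentiable (by simp) x)]
      ring
    simp only [h2] at h1
    rw [integral_add ((m1.contMul hΩ.b hΩ.o (hstc n)).mulInt hφ.mem)
      ((h.m.contMul hΩ.b hΩ.o (hGc n)).mulInt (hφ.pd i).mem)] at h1
    rw [h1]
    congr 1
    refine integral_congr_ae (Eventually.of_forall fun x => ?_)
    simp only; ring

lemma wd_zero {d : ℕ} {Ω : Set (Euc d)} (ho : IsOpen Ω) {f : Euc d → ℂ}
    (hf : LocallyIntegrableOn f Ω volume)
    (h : ∀ φ, IsTestFun Ω φ → ∫ x in Ω, f x * φ x = 0) :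
    ∀ᵐ x ∂(volume : Measure (Euc d)), x ∈ Ω → f x = 0 := by
  refine ho.ae_eq_zero_of_integral_contDiff_smul_eq_zero hf fun g hg hc hs => ?_
  have ht : IsTestFun Ω (fun x => (g x : ℂ)) :=
    ⟨Complex.ofRealCLM.contDiff.comp hg, hc.comp_left (g := fun r : ℝ => (r : ℂ)) (by simp),
      (tsupport_comp_subset (g := fun r : ℝ => (r : ℂ)) (by simp) g).trans hs⟩
  have h1 := h _ ht
  rw [← ind_mul_int ho] at h1
  rw [← h1]
  refine integral_congr_ae (Eventually.of_forall fun x => ?_)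
  by_cases hx : x ∈ Ω
  · simp [hx, mul_comm]
  · have : g x = 0 := by
      by_contra hne
      exact hx (hs (subset_tsupport _ hne))
    simp [this]

lemma MemL2.locInt {d : ℕ} {Ω : Set (Euc d)} {f : Euc d → ℂ} (hf : MemL2 Ω f) :
    LocallyIntegrableOn f Ω volume := by
  intro x hx
  refine ⟨Ω ∩ Metric.ball x 1, inter_mem_nhdsWithin _ (Metric.ball_mem_nhds x one_pos), ?_⟩
  have h1 : MemLp f 2 (volume.restrict (Ω ∩ Metric.ball x 1)) :=
    hf.mono_measure (Measure.restrict_mono inter_subset_left le_rfl)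
  have : IsFiniteMeasure ((volume : Measure (Euc d)).restrict (Ω ∩ Metric.ball x 1)) :=
    ⟨by
      rw [Measure.restrict_apply_univ]
      exact (measure_mono inter_subset_right).trans_lt measure_ball_lt_top⟩
  exact h1.integrable (by norm_num)

lemma memL2_ae_of {d : ℕ} {Ω : Set (Euc d)} (hΩ : IsOpen Ω) {P : Euc d → Prop}
    (h : ∀ᵐ x ∂(volume : Measure (Euc d)), x ∈ Ω → P x) : ∀ᵐ x ∂(volume.restrict Ω), P x :=
  (ae_restrict_iff' hΩ.measurableSet).2 h

lemma memH10_H10f {d : ℕ} {Ω : Set (Euc d)} (hΩ : Dom Ω) {u : Euc d → ℂ} {a : Fin d → Euc d → ℂ}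
    (h : H1f Ω u a) (h0 : MemH10 Ω u) : H10f Ω u a := by
  refine ⟨h.m, h.m', fun i φ hφ => ?_⟩
  obtain ⟨v, hv, hw⟩ := h0.2 i
  unfold IsWeakDeriv at hw
  simp only [Measure.restrict_univ] at hw
  have hv' : MemLp v 2 volume := by simpa [MemL2] using hv
  have v1 : ∀ᵐ x ∂(volume : Measure (Euc d)), x ∈ Ω → v x - a i x = 0 := by
    have hvΩ : MemL2 Ω v := hv'.mono_measure Measure.restrict_le_self
    refine wd_zero hΩ.o (hvΩ.sub' (h.m' i)).locInt fun ψ hψ => ?_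
    have e1 := hw ψ (hψ.mono (subset_univ _))
    rw [ind_mul_int hΩ.o, h.w i ψ hψ] at e1
    have e2 : ∫ x in Ω, v x * ψ x = ∫ x, v x * ψ x :=
      setIntegral_eq_integral_of_forall_compl_eq_zero fun x hx => by simp [test_zero_off hψ hx]
    simp only [sub_mul]
    rw [integral_sub (hvΩ.mulInt hψ.mem) ((h.m' i).mulInt hψ.mem), e2, neg_injective e1, sub_self]
  have v2 : ∀ᵐ x ∂(volume : Measure (Euc d)), x ∈ (closure Ω)ᶜ → v x = 0 := by
    have hvΩ : MemL2 (closure Ω)ᶜ v := hv'.mono_measure Measure.restrict_le_self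
    refine wd_zero isClosed_closure.isOpen_compl hvΩ.locInt fun ψ hψ => ?_
    have e1 := hw ψ (hψ.mono (subset_univ _))
    have e2 : ∫ x in (closure Ω)ᶜ, v x * ψ x = ∫ x, v x * ψ x :=
      setIntegral_eq_integral_of_forall_compl_eq_zero fun x hx => by simp [test_zero_off hψ hx]
    rw [e2, ← neg_eq_zero, ← e1]
    refine integral_eq_zero_of_ae (Eventually.of_forall fun x => ?_)
    by_cases hx : x ∈ Ω
    · have : pd i ψ x = 0 := test_zero_off (hψ.pd i) (fun hc => hc (subset_closure hx))
      simp [this]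
    · simp [hx]
  have v3 : ∀ᵐ x ∂(volume : Measure (Euc d)), x ∉ frontier Ω := by
    rw [ae_iff]; simpa using hΩ.c.addHaar_frontier volume
  have e1 := hw φ hφ
  rw [ind_mul_int hΩ.o] at e1
  rw [e1, ← ind_mul_int hΩ.o]
  congr 1
  refine integral_congr_ae ?_
  filter_upwards [v1, v2, v3] with x h1 h2 h3
  by_cases hx : x ∈ Ω
  · have := h1 hx
    simp [hx, sub_eq_zero.1 this]
  · have : x ∈ (closure Ω)ᶜ := by
      intro hc
      apply h3
      rw [frontier, hΩ.o.interior_eq]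
      exact ⟨hc, hx⟩
    simp [hx, h2 this]

/-- second weak derivatives commute -/
lemma H1f.symm {d : ℕ} {Ω : Set (Euc d)} (ho : IsOpen Ω) {u : Euc d → ℂ} {a : Fin d → Euc d → ℂ}
    {b : Fin d → Fin d → Euc d → ℂ} (h : H1f Ω u a) (hb : ∀ j, H1f Ω (a j) (fun i => b i j))
    (i j : Fin d) : ∀ᵐ x ∂(volume.restrict Ω), b i j x = b j i x := by
  have : ∀ᵐ x ∂(volume.restrict Ω), b i j x - b j i x = 0 := by
    refine memL2_ae_of ho (wd_zero ho (((hb j).m' i).sub' ((hb i).m' j)).locInt fun φ hφ => ?_)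
    simp only [sub_mul]
    rw [integral_sub (((hb j).m' i).mulInt hφ.mem) (((hb i).m' j).mulInt hφ.mem)]
    have e1 := (hb j).w i φ hφ
    have e2 := (hb i).w j φ hφ
    have e3 := h.w j _ (hφ.pd i)
    have e4 := h.w i _ (hφ.pd j)
    have e5 : ∀ x, pd i (pd j φ) x = pd j (pd i φ) x := pd_comm' hφ.1 i j
    simp only [e5] at e4
    rw [e3] at e4
    have e6 := neg_injective e4
    rw [e1, e2] at e6
    rw [neg_injective e6, sub_self]
  filter_upwards [this] with x hx using sub_eq_zero.1 hx

lemma SobFun.h1 {d : ℕ} {Ω : Set (Euc d)} (U : SobFun d Ω 2) : H1f Ω U.u U.d1 := by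
  refine ⟨U.mem 0 (by norm_num) _, fun i => U.mem 1 (by norm_num) _, fun i => ?_⟩
  have := U.weak 0 (by norm_num) (fun i => i.elim0) i
  have e : (Fin.cons i (fun i : Fin 0 => i.elim0) : Fin 1 → Fin d) = fun _ => i := by
    ext k; fin_cases k; rfl
  rw [e] at this
  exact this

/-- second derivatives -/
def SobFun.d2 {d : ℕ} {Ω : Set (Euc d)} (U : SobFun d Ω 2) (i j : Fin d) : Euc d → ℂ :=
  U.D 2 (Fin.cons i (fun _ => j))

lemma SobFun.h2 {d : ℕ} {Ω : Set (Euc d)} (U : SobFun d Ω 2) (j : Fin d) :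
    H1f Ω (U.d1 j) (fun i => U.d2 i j) :=
  ⟨U.mem 1 (by norm_num) _, fun i => U.mem 2 (by norm_num) _, fun i => U.weak 1 (by norm_num) _ i⟩

lemma sobNorm_sq {d : ℕ} {Ω : Set (Euc d)} (U : SobFun d Ω 2) :
    SobNormInt U = Real.sqrt ((L2N Ω U.u)^2 + ∑ i, (L2N Ω (U.d1 i))^2
      + ∑ i, ∑ j, (L2N Ω (U.d2 i j))^2) := by
  unfold SobNormInt
  congr 1
  rw [Finset.sum_range_succ, Finset.sum_range_succ, Finset.sum_range_succ, Finset.sum_range_zero,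
    zero_add]
  congr 1
  · congr 1
    · rw [Fintype.sum_eq_single (fun i : Fin 0 => i.elim0)]
      · rfl
      · intro v hv; exact absurd (Subsingleton.elim _ _) hv
    · symm
      refine Fintype.sum_equiv (Equiv.funUnique (Fin 1) (Fin d)).symm _ _ fun i => ?_
      rfl
  · rw [← Fintype.sum_prod_type' (fun i j => (L2N Ω (U.d2 i j))^2)]
    symm
    refine Fintype.sum_equiv (finTwoArrowEquiv (Fin d)).symm _ _ fun p => ?_
    unfold SobFun.d2
    congr 4
    ext k
    fin_cases k <;> rfl

/-- integrable with zero integral -/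
def ZI {d : ℕ} (Ω : Set (Euc d)) (F : Euc d → ℂ) : Prop :=
  Integrable F (volume.restrict Ω) ∧ ∫ x in Ω, F x = 0

lemma ZI.add {d : ℕ} {Ω : Set (Euc d)} {F G : Euc d → ℂ} (hF : ZI Ω F) (hG : ZI Ω G) :
    ZI Ω (fun x => F x + G x) :=
  ⟨hF.1.add hG.1, by rw [integral_add hF.1 hG.1, hF.2, hG.2, add_zero]⟩

lemma ZI.sub {d : ℕ} {Ω : Set (Euc d)} {F G : Euc d → ℂ} (hF : ZI Ω F) (hG : ZI Ω G) :
    ZI Ω (fun x => F x - G x) :=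
  ⟨hF.1.sub hG.1, by rw [integral_sub hF.1 hG.1, hF.2, hG.2, sub_zero]⟩

lemma ZI.sum {d : ℕ} {Ω : Set (Euc d)} {F : Fin d → Euc d → ℂ} (hF : ∀ i, ZI Ω (F i)) :
    ZI Ω (fun x => ∑ i, F i x) :=
  ⟨integrable_finsetSum _ fun i _ => (hF i).1, by
    rw [integral_finsetSum _ fun i _ => (hF i).1]
    exact Finset.sum_eq_zero fun i _ => (hF i).2⟩

lemma ZI.congr {d : ℕ} {Ω : Set (Euc d)} {F G : Euc d → ℂ} (hF : ZI Ω F)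
    (h : ∀ᵐ x ∂(volume.restrict Ω), F x = G x) : ZI Ω G :=
  ⟨hF.1.congr h, by rw [← integral_congr_ae h, hF.2]⟩

lemma ZI.congr' {d : ℕ} {Ω : Set (Euc d)} {F G : Euc d → ℂ} (hF : ZI Ω F)
    (h : ∀ x, F x = G x) : ZI Ω G := hF.congr (Eventually.of_forall h)

lemma H10f.zcurl {d : ℕ} {Ω : Set (Euc d)} (hΩ : Dom Ω) {c : Euc d → ℂ} {c' : Fin d → Euc d → ℂ}
    (h : H10f Ω c c') {b : Euc d → ℂ} {b' : Fin d → Euc d → ℂ} (hb : H1f Ω b b') (i j : Fin d) :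
    ZI Ω (fun x => b' j x * c' i x - b' i x * c' j x) := by
  have i1 := (hb.m' j).mulInt (h.m' i)
  have i2 := (hb.m' i).mulInt (h.m' j)
  exact ⟨i1.sub i2, by rw [integral_sub i1 i2, h.curl hΩ hb i j, sub_self]⟩

lemma H10f.zibp {d : ℕ} {Ω : Set (Euc d)} (hΩ : Dom Ω) {c : Euc d → ℂ} {c' : Fin d → Euc d → ℂ}
    (h : H10f Ω c c') {a a' : Euc d → ℂ} (ha : MemL2 Ω a) (ha' : MemL2 Ω a') {i : Fin d}
    (hw : IsWeakDeriv Ω i a a') :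
    ZI Ω (fun x => a x * c' i x + a' x * c x) := by
  have i1 := ha.mulInt (h.m' i)
  have i2 := ha'.mulInt h.m
  exact ⟨i1.add i2, by rw [integral_add i1 i2, h.ibp hΩ ha ha' hw, neg_add_cancel]⟩

lemma H10f.zw {d : ℕ} {Ω : Set (Euc d)} {c : Euc d → ℂ} {c' : Fin d → Euc d → ℂ}
    (h : H10f Ω c c') (i : Fin d) {φ : Euc d → ℂ} (hφ : IsTestFun univ φ) :
    ZI Ω (fun x => c x * pd i φ x + c' i x * φ x) := by
  have i1 : IntegrableOn _ Ω volume := h.m.mulInt (hφ.pd i).mem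
  have i2 : IntegrableOn _ Ω volume := (h.m' i).mulInt hφ.mem
  exact ⟨i1.add i2, by rw [integral_add i1 i2, h.w i φ hφ, neg_add_cancel]⟩

lemma test_H1f {d : ℕ} {Ω : Set (Euc d)} (ho : IsOpen Ω) {φ : Euc d → ℂ} (hφ : IsTestFun univ φ) :
    H1f Ω φ (fun i => pd i φ) := by
  refine ⟨hφ.mem, fun i => (hφ.pd i).mem, fun i ψ hψ => ?_⟩
  have e1 : ∫ x in Ω, φ x * pd i ψ x = ∫ x, φ x * pd i ψ x :=
    setIntegral_eq_integral_of_forall_compl_eq_zero fun x hx => by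
      simp [test_zero_off (hψ.pd i) hx]
  have e2 : ∫ x in Ω, pd i φ x * ψ x = ∫ x, pd i φ x * ψ x :=
    setIntegral_eq_integral_of_forall_compl_eq_zero fun x hx => by simp [test_zero_off hψ hx]
  rw [e1, e2]
  have hint : ∀ f g : Euc d → ℂ, Continuous f → Continuous g → HasCompactSupport g →
      Integrable (fun x => f x * g x) volume := fun f g hf hg hc =>
    (hf.mul hg).integrable_of_hasCompactSupport hc.mul_left
  exact integral_mul_fderiv_eq_neg_fderiv_mul_of_integrable
    (hint _ _ (hφ.pd i).1.continuous hψ.1.continuous hψ.2.1)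
    (hint _ _ hφ.1.continuous (hψ.pd i).1.continuous (hψ.pd i).2.1)
    (hint _ _ hφ.1.continuous hψ.1.continuous hψ.2.1)
    (fun x _ => sm_diff hφ.1 x) (fun x _ => sm_diff hψ.1 x)

lemma W0 {d : ℕ} {Ω : Set (Euc d)} (hΩ : Dom Ω) {η : Euc d → ℝ} (hη : ContDiff ℝ (⊤ : ℕ∞) η)
    (hηΩ : Ω = {x | 0 < η x}) {z : Euc d → ℂ} {z' : Fin d → Euc d → ℂ} (hz : H1f Ω z z')
    {ψ : Euc d → ℂ} (hψ : IsTestFun univ ψ) (i j : Fin d) :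
    ZI Ω (fun x => (pd i (cx η) x * z' j x - pd j (cx η) x * z' i x) * ψ x
      + z x * (pd i (cx η) x * pd j ψ x - pd j (cx η) x * pd i ψ x)) := by
  have h1 := ((test_H1f hΩ.o hψ).eta hΩ hη hηΩ).zcurl hΩ hz i j
  have h2 := ((test_H1f hΩ.o (hψ.pd j)).eta hΩ hη hηΩ).zibp hΩ hz.m (hz.m' i) (hz.w i)
  have h3 := ((test_H1f hΩ.o (hψ.pd i)).eta hΩ hη hηΩ).zibp hΩ hz.m (hz.m' j) (hz.w j)
  refine ((h1.add h2).sub h3).congr' fun x => ?_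
  simp only [pd_comm' hψ.1 j i x]
  ring

lemma H10f.gt {d : ℕ} {Ω : Set (Euc d)} {u : Euc d → ℂ} {a : Fin d → Euc d → ℂ}
    (hu : H10f Ω u a) {X : Euc d → ℂ} (hX : IsTestFun univ X) (j k : Fin d) :
    ZI Ω (fun x => a j x * pd k X x - a k x * pd j X x) := by
  refine ((hu.zw j (hX.pd k)).sub (hu.zw k (hX.pd j))).congr' fun x => ?_
  simp only [pd_comm' hX.1 j k x]
  ring

/-- tangential derivatives of the gradient components -/
lemma Wij {d : ℕ} {Ω : Set (Euc d)} (hΩ : Dom Ω) {η : Euc d → ℝ} (hη : ContDiff ℝ (⊤ : ℕ∞) η)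
    (hηΩ : Ω = {x | 0 < η x}) {u : Euc d → ℂ} {a : Fin d → Euc d → ℂ}
    {b : Fin d → Fin d → Euc d → ℂ} (hu : H10f Ω u a) (hb : ∀ j, H1f Ω (a j) (fun i => b i j))
    (i j : Fin d) :
    H10f Ω (fun x => pd i (cx η) x * a j x - pd j (cx η) x * a i x)
      (fun k x => (pd k (pd i (cx η)) x * a j x + pd i (cx η) x * b k j x)
        - (pd k (pd j (cx η)) x * a i x + pd j (cx η) x * b k i x)) := by
  have he := cx_smooth hη
  have g1 := (hb j).smul hΩ (pd_smooth he i)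
  have g2 := (hb i).smul hΩ (pd_smooth he j)
  refine ⟨g1.m.sub' g2.m, fun k => (g1.m' k).sub' (g2.m' k), fun k φ hφ => ?_⟩
  have m1 := g1.m.sub' g2.m
  have m2 := (g1.m' k).sub' (g2.m' k)
  have z1 := W0 hΩ hη hηΩ (hb k) hφ i j
  have hX := hφ.mul (pd_smooth he i)
  have hY := hφ.mul (pd_smooth he j)
  have z2 := hu.gt hX j k
  have z3 := hu.gt hY i k
  have hs : ∀ p q, ∀ᵐ x ∂(volume.restrict Ω), b p q x = b q p x := fun p q =>
    hu.toH1f.symm hΩ.o hb p q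
  have z := ((z1.add z2).sub z3).congr (G := fun x =>
    (pd i (cx η) x * a j x - pd j (cx η) x * a i x) * pd k φ x +
    ((pd k (pd i (cx η)) x * a j x + pd i (cx η) x * b k j x)
        - (pd k (pd j (cx η)) x * a i x + pd j (cx η) x * b k i x)) * φ x) (by
    filter_upwards [hs j k, hs i k] with x h1 h2
    simp only [pd_mul (sm_diff (pd_smooth he _) x) (sm_diff hφ.1 x), h1, h2, pd_comm' he i j x]
    ring)
  have zz := z.2
  rw [integral_add (m1.mulInt (hφ.pd k).mem) (m2.mulInt hφ.mem)] at zz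
  exact eq_neg_of_add_eq_zero_left zz

lemma key_id {d : ℕ} {Ω : Set (Euc d)} (hΩ : Dom Ω) {η : Euc d → ℝ} (hη : ContDiff ℝ (⊤ : ℕ∞) η)
    (hηΩ : Ω = {x | 0 < η x}) {u : Euc d → ℂ} {a : Fin d → Euc d → ℂ}
    {b : Fin d → Fin d → Euc d → ℂ} (hu : H10f Ω u a) (hb : ∀ j, H1f Ω (a j) (fun i => b i j)) :
    ZI Ω (fun x => ∑ i, ∑ j, (cx η x * (b i i x * (starRingEnd ℂ) (b j j x)
        - b i j x * (starRingEnd ℂ) (b i j x))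
      - (pd i (pd j (cx η)) x * a i x * (starRingEnd ℂ) (a j x)
        - pd i (pd i (cx η)) x * a j x * (starRingEnd ℂ) (a j x)))) := by
  have hs : ∀ p q, ∀ᵐ x ∂(volume.restrict Ω), b p q x = b q p x := fun p q =>
    hu.toH1f.symm hΩ.o hb p q
  have z1 : ∀ i j, ZI Ω _ := fun i j => ((hb j).conj.eta hΩ hη hηΩ).zcurl hΩ (hb i) j i
  have z2 : ∀ i j, ZI Ω _ := fun i j => (Wij hΩ hη hηΩ hu hb i j).zibp hΩ (hb j).conj.m
    ((hb j).conj.m' i) ((hb j).conj.w i)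
  have z3 := ZI.sum fun i => ZI.sum fun j => (z1 i j).add (z2 i j)
  refine z3.congr ?_
  have hs' : ∀ᵐ x ∂(volume.restrict Ω), ∀ p q, b p q x = b q p x :=
    ae_all_iff.2 fun p => ae_all_iff.2 fun q => hs p q
  filter_upwards [hs'] with x hx
  rw [← sub_eq_zero, ← Finset.sum_sub_distrib]
  simp only [← Finset.sum_sub_distrib]
  have e2 : ∑ i, ∑ j, ((starRingEnd ℂ) (b i j x) * (pd i (cx η) x * a j x)
      - (starRingEnd ℂ) (b i j x) * (pd j (cx η) x * a i x)) = 0 := by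
    simp only [Finset.sum_sub_distrib]
    rw [sub_eq_zero, Finset.sum_comm]
    refine Finset.sum_congr rfl fun i _ => Finset.sum_congr rfl fun j _ => ?_
    rw [hx]
  rw [← e2]
  refine Finset.sum_congr rfl fun i _ => Finset.sum_congr rfl fun j _ => ?_
  rw [hx j i]
  ring

/-- concavity of the defining function, in the form used in the Hessian estimate -/
def Conc {d : ℕ} (Ω : Set (Euc d)) (η : Euc d → ℝ) : Prop :=
  ∀ x ∈ Ω, ∀ z : Fin d → ℂ, 0 ≤ (∑ i, ∑ j, (pd i (pd j (cx η)) x * z i * (starRingEnd ℂ) (z j)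
        - pd i (pd i (cx η)) x * z j * (starRingEnd ℂ) (z j))).re

lemma mul_conj_sq (z : ℂ) : z * (starRingEnd ℂ) z = ((‖z‖^2 : ℝ) : ℂ) := by
  rw [Complex.mul_conj, Complex.normSq_eq_norm_sq]

lemma MemL2.sqInt {d : ℕ} {Ω : Set (Euc d)} {f : Euc d → ℂ} (hf : MemL2 Ω f) :
    Integrable (fun x => ‖f x‖^2) (volume.restrict Ω) := by
  have := (hf.mulInt hf.conj)
  have h2 := (Integrable.re this)
  refine h2.congr (Eventually.of_forall fun x => ?_)
  simp only [mul_conj_sq]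
  exact Complex.ofReal_re _

lemma key_eta {d : ℕ} {Ω : Set (Euc d)} (hΩ : Dom Ω) {η : Euc d → ℝ} (hη : ContDiff ℝ (⊤ : ℕ∞) η)
    (hηΩ : Ω = {x | 0 < η x}) (hc : Conc Ω η) {u : Euc d → ℂ} {a : Fin d → Euc d → ℂ}
    {b : Fin d → Fin d → Euc d → ℂ} (hu : H10f Ω u a) (hb : ∀ j, H1f Ω (a j) (fun i => b i j)) 
    (h1 : ∀ x ∈ Ω, η x ≤ 1) :
    0 ≤ ∫ x in Ω, η x * (‖∑ i, b i i x‖^2 - ∑ i, ∑ j, ‖b i j x‖^2) := by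
  have z := key_id hΩ hη hηΩ hu hb
  have m1 : MemL2 Ω (fun x => ∑ i, b i i x) := MemL2.sum' fun i => (hb i).m' i
  have hI : Integrable (fun x => ‖∑ i, b i i x‖^2 - ∑ i, ∑ j, ‖b i j x‖^2) (volume.restrict Ω) :=
    m1.sqInt.sub (integrable_finsetSum _ fun i _ => integrable_finsetSum _ fun j _ =>
      ((hb j).m' i).sqInt)
  have hI2 : Integrable (fun x => η x * (‖∑ i, b i i x‖^2 - ∑ i, ∑ j, ‖b i j x‖^2))
      (volume.restrict Ω) := by
    refine hI.bdd_mul (c := 1) hη.continuous.aestronglyMeasurable ?_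
    filter_upwards [ae_restrict_mem hΩ.o.measurableSet] with x hx
    have : 0 < η x := by rw [hηΩ] at hx; exact hx
    rw [Real.norm_of_nonneg this.le]; exact h1 x hx
  have e0 := congrArg Complex.re z.2
  have e1 := integral_re z.1
  have e2 : ∫ x in Ω, (∑ i, ∑ j, (cx η x * (b i i x * (starRingEnd ℂ) (b j j x)
        - b i j x * (starRingEnd ℂ) (b i j x))
      - (pd i (pd j (cx η)) x * a i x * (starRingEnd ℂ) (a j x)
        - pd i (pd i (cx η)) x * a j x * (starRingEnd ℂ) (a j x)))).re = 0 := by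
    refine Eq.trans e1 ?_
    exact e0
  rw [← e2]
  refine integral_mono_ae z.1.re hI2 ?_
  filter_upwards [ae_restrict_mem hΩ.o.measurableSet] with x hx
  have h3 := hc x hx (fun i => a i x)
  have h4 : ∑ i, ∑ j, cx η x * (b i i x * (starRingEnd ℂ) (b j j x)
        - b i j x * (starRingEnd ℂ) (b i j x))
      = ((η x * (‖∑ i, b i i x‖^2 - ∑ i, ∑ j, ‖b i j x‖^2) : ℝ) : ℂ) := by
    simp only [← Finset.mul_sum, Finset.sum_sub_distrib, mul_conj_sq]
    push_cast
    rw [← Complex.ofReal_pow, ← mul_conj_sq, map_sum, Finset.sum_mul_sum]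
    simp only [cx, Finset.mul_sum]
  simp only [Finset.sum_sub_distrib] at h3 h4 ⊢
  rw [h4]
  simp only [Complex.sub_re, Complex.ofReal_re] at h3 ⊢
  linarith

lemma hess_bound {d : ℕ} {Ω : Set (Euc d)} (hΩ : Dom Ω) {η : ℕ → Euc d → ℝ}
    (hη : ∀ k, ContDiff ℝ (⊤ : ℕ∞) (η k)) (hηΩ : ∀ k, Ω = {x | 0 < η k x}) (hc : ∀ k, Conc Ω (η k))
    (h1 : ∀ k, ∀ x ∈ Ω, η k x ≤ 1) (hl : ∀ x ∈ Ω, Tendsto (fun k => η k x) atTop (𝓝 1))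
    {u : Euc d → ℂ} {a : Fin d → Euc d → ℂ}
    {b : Fin d → Fin d → Euc d → ℂ} (hu : H10f Ω u a) (hb : ∀ j, H1f Ω (a j) (fun i => b i j)) :
    ∑ i, ∑ j, (L2N Ω (b i j))^2 ≤ (L2N Ω (fun x => ∑ i, b i i x))^2 := by
  have m1 : MemL2 Ω (fun x => ∑ i, b i i x) := MemL2.sum' fun i => (hb i).m' i
  have hI0 : Integrable (fun x => ∑ i, ∑ j, ‖b i j x‖^2) (volume.restrict Ω) :=
    (integrable_finsetSum _ fun i _ => integrable_finsetSum _ fun j _ => ((hb j).m' i).sqInt)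
  have hI : Integrable (fun x => ‖∑ i, b i i x‖^2 - ∑ i, ∑ j, ‖b i j x‖^2) (volume.restrict Ω) :=
    m1.sqInt.sub hI0
  have key : 0 ≤ ∫ x in Ω, (‖∑ i, b i i x‖^2 - ∑ i, ∑ j, ‖b i j x‖^2) := by
    have lim : Tendsto (fun k => ∫ x in Ω, η k x * (‖∑ i, b i i x‖^2 - ∑ i, ∑ j, ‖b i j x‖^2)) atTop
        (𝓝 (∫ x in Ω, (‖∑ i, b i i x‖^2 - ∑ i, ∑ j, ‖b i j x‖^2))) := by
      refine tendsto_integral_of_dominated_convergence _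
        (fun k => ((hη k).continuous.aestronglyMeasurable).mul hI.1) hI.norm (fun k => ?_) ?_
      · filter_upwards [ae_restrict_mem hΩ.o.measurableSet] with x hx
        have : 0 < η k x := by rw [hηΩ k] at hx; exact hx
        rw [norm_mul, Real.norm_of_nonneg this.le]
        exact mul_le_of_le_one_left (norm_nonneg _) (h1 k x hx)
      · filter_upwards [ae_restrict_mem hΩ.o.measurableSet] with x hx
        simpa using (hl x hx).mul_const (‖∑ i, b i i x‖^2 - ∑ i, ∑ j, ‖b i j x‖^2)
    exact ge_of_tendsto' lim fun k => key_eta hΩ (hη k) (hηΩ k) (hc k) hu hb (h1 k)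
  rw [integral_sub m1.sqInt hI0, integral_finsetSum _ fun i _ => integrable_finsetSum _ fun j _ =>
    ((hb j).m' i).sqInt] at key
  have e : ∀ i, ∫ x in Ω, ∑ j, ‖b i j x‖^2 = ∑ j, (L2N Ω (b i j))^2 := by
    intro i
    rw [integral_finsetSum _ fun j _ => ((hb j).m' i).sqInt]
    exact Finset.sum_congr rfl fun j _ => (L2N_sq ((hb j).m' i)).symm
  simp only [e] at key
  rw [L2N_sq m1]
  linarith

lemma bdry_zero {E : Type*} [NormedAddCommGroup E] [NormedSpace ℝ E] {S : Set E} {f : E → ℝ}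
    (hf : Continuous f) (hS : S = {x | f x < 0}) (ho : IsOpen S) {z : E} (hz : z ∈ frontier S) :
    f z = 0 := by
  apply le_antisymm
  · have hc : IsClosed {x | f x ≤ 0} := isClosed_le hf continuous_const
    have : closure S ⊆ {x | f x ≤ 0} := closure_minimal (fun x hx => by
      rw [hS] at hx
      have hx' : f x < 0 := hx
      exact hx'.le) hc
    exact this hz.1
  · by_contra h
    push Not at h
    have : z ∈ S := by rw [hS]; exact h
    have h2 := hz.2
    rw [ho.interior_eq] at h2
    exact h2 this

lemma transv {E : Type*} [NormedAddCommGroup E] [NormedSpace ℝ E] {S : Set E} {f : E → ℝ}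
    (hf : Differentiable ℝ f) (hS : S = {x | f x < 0}) (ho : IsOpen S) (hc : Convex ℝ S)
    (h0 : (0:E) ∈ S) {z : E} (hz : z ∈ frontier S) (hd : fderiv ℝ f z ≠ 0) : fderiv ℝ f z z ≠ 0 := by
  have fz := bdry_zero hf.continuous hS ho hz
  have h1 : ∀ w ∈ S, fderiv ℝ f z (w - z) ≤ 0 := by
    intro w hw
    have hg : HasDerivAt (fun t : ℝ => f (z + t • (w - z))) (fderiv ℝ f z (w - z)) 0 := by
      have e : HasDerivAt (fun t : ℝ => z + t • (w - z)) (w - z) 0 := by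
        simpa using ((hasDerivAt_id (0:ℝ)).smul_const (w - z)).const_add z
      have hf' : HasFDerivAt f (fderiv ℝ f z) (z + (0:ℝ) • (w - z)) := by
        simpa using (hf z).hasFDerivAt
      exact hf'.comp_hasDerivAt (0:ℝ) e
    have hs := hg.tendsto_slope_zero_right
    refine le_of_tendsto hs ?_
    have : Ioo (0:ℝ) 1 ∈ 𝓝[>] (0:ℝ) := Ioo_mem_nhdsGT one_pos
    filter_upwards [this] with t ht
    have hm : z + t • (w - z) ∈ S := by
      have := hc.combo_closure_interior_mem_interior (x := z) (y := w) hz.1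
        (by rw [ho.interior_eq]; exact hw) (a := 1 - t) (b := t) (by linarith [ht.2]) ht.1 (by ring)
      rw [ho.interior_eq] at this
      convert this using 1
      module
    have hn : f (z + t • (w - z)) < 0 := by
      have h := hm
      rw [hS] at h; exact h
    simp only [zero_add, zero_smul, add_zero, fz, sub_zero, smul_eq_mul]
    exact mul_nonpos_of_nonneg_of_nonpos (inv_nonneg.2 ht.1.le) hn.le
  intro hzz
  apply hd
  have hmax : IsLocalMax (fun w => fderiv ℝ f z w) 0 := by
    filter_upwards [ho.mem_nhds h0] with w hw
    have := h1 w hw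
    rw [map_sub, hzz] at this
    simpa using this
  have := hmax.fderiv_eq_zero
  rwa [ContinuousLinearMap.fderiv] at this

lemma gauge_smooth {d : ℕ} {S : Set (Euc d)} {f : Euc d → ℝ} (hf : ContDiff ℝ (⊤ : ℕ∞) f)
    (hS : S = {x | f x < 0}) (ho : IsOpen S) (hc : Convex ℝ S) (hb : Bornology.IsBounded S)
    (h0 : (0 : Euc d) ∈ S) (hd : ∀ x ∈ frontier S, fderiv ℝ f x ≠ 0) {y : Euc d} (hy : y ≠ 0) :
    ContDiffAt ℝ (⊤ : ℕ∞) (gauge S) y := by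
  have hn : S ∈ 𝓝 (0 : Euc d) := ho.mem_nhds h0
  have habs : Absorbent ℝ S := absorbent_nhds_zero hn
  have hpos : ∀ x : Euc d, x ≠ 0 → 0 < gauge S x := fun x hx =>
    (gauge_pos habs (NormedSpace.isVonNBounded_of_isBounded ℝ hb)).2 hx
  have hcont : Continuous (gauge S) := continuous_gauge hc hn
  have hfr : ∀ x : Euc d, x ≠ 0 → (gauge S x)⁻¹ • x ∈ frontier S := by
    intro x hx
    rw [← gauge_eq_one_iff_mem_frontier hc hn, gauge_smul_of_nonneg (inv_nonneg.2 (hpos x hx).le)]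
    simp [(hpos x hx).ne']
  let Φ : Euc d × ℝ → ℝ := fun p => f (p.2 • p.1)
  have hΦ : ContDiff ℝ (⊤ : ℕ∞) Φ := hf.comp (contDiff_snd.smul contDiff_fst)
  have hΦz : ∀ x : Euc d, x ≠ 0 → Φ (x, (gauge S x)⁻¹) = 0 := fun x hx =>
    bdry_zero hf.continuous hS ho (hfr x hx)
  let p0 : Euc d × ℝ := (y, (gauge S y)⁻¹)
  have cdf : ContDiffAt ℝ (⊤ : ℕ∞) Φ p0 := hΦ.contDiffAt
  have hder : fderiv ℝ Φ p0 (0, 1) = fderiv ℝ f ((gauge S y)⁻¹ • y) y := by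
    have e1 : HasFDerivAt (fun p : Euc d × ℝ => p.2 • p.1) _ p0 :=
      (hasFDerivAt_snd (𝕜 := ℝ) (p := p0)).smul (hasFDerivAt_fst (𝕜 := ℝ) (p := p0))
    have e2 : HasFDerivAt f (fderiv ℝ f ((gauge S y)⁻¹ • y)) (p0.2 • p0.1) :=
      (hf.differentiable (by simp) _).hasFDerivAt
    have e3 : HasFDerivAt Φ _ p0 := e2.comp p0 e1
    rw [e3.fderiv]
    simp [p0]
  have hne : fderiv ℝ Φ p0 (0, 1) ≠ 0 := by
    rw [hder]
    have := transv (hf.differentiable (by simp)) hS ho hc h0 (hfr y hy) (hd _ (hfr y hy))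
    rw [map_smul, smul_eq_mul] at this
    exact right_ne_zero_of_mul this
  have if2 : (fderiv ℝ Φ p0 ∘L .inr ℝ (Euc d) ℝ).IsInvertible := by
    refine ⟨ContinuousLinearEquiv.unitsEquivAut ℝ (Units.mk0 _ hne), ?_⟩
    ext
    simp
  have key := cdf.eventually_apply_eq_iff_implicitFunction (by simp) if2
  have sm := cdf.contDiffAt_implicitFunction (by simp) if2
  have hcp : ContinuousAt (fun x : Euc d => (x, (gauge S x)⁻¹)) y :=
    continuousAt_id.prodMk (hcont.continuousAt.inv₀ (hpos y hy).ne')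
  have ev : ∀ᶠ x in 𝓝 y, (gauge S x)⁻¹ = cdf.implicitFunction (by simp) if2 x := by
    filter_upwards [hcp.eventually key, isOpen_ne.mem_nhds hy] with x hx hx0
    refine (hx.1 ?_).symm
    rw [hΦz x hx0]
    exact (hΦz y hy).symm
  have s2 : ContDiffAt ℝ (⊤ : ℕ∞) (fun x => (gauge S x)⁻¹) y := sm.congr_of_eventuallyEq ev
  have s3 := s2.inv (inv_ne_zero (hpos y hy).ne')
  refine s3.congr_of_eventuallyEq (Eventually.of_forall fun x => ?_)
  simp

lemma exists_psi {d : ℕ} {S : Set (Euc d)} {f : Euc d → ℝ} (hf : ContDiff ℝ (⊤ : ℕ∞) f)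
    (hS : S = {x | f x < 0}) (ho : IsOpen S) (hc : Convex ℝ S) (hb : Bornology.IsBounded S)
    (h0 : (0 : Euc d) ∈ S) (hd : ∀ x ∈ frontier S, fderiv ℝ f x ≠ 0) :
    ∃ ψ : Euc d → ℝ, ContDiff ℝ (⊤ : ℕ∞) ψ ∧ ConvexOn ℝ univ ψ ∧ (∀ x, 0 ≤ ψ x) ∧
      S = {x | ψ x < 1} := by
  have hn : S ∈ 𝓝 (0 : Euc d) := ho.mem_nhds h0
  have habs : Absorbent ℝ S := absorbent_nhds_zero hn
  have hcont : Continuous (gauge S) := continuous_gauge hc hn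
  have h3 : 0 < chi 3 := by linarith [chi_ge 3]
  refine ⟨fun x => chi (3 * gauge S x) / chi 3, ?_, ?_, fun x => div_nonneg (chi_nonneg _) h3.le, ?_⟩
  · rw [contDiff_iff_contDiffAt]
    intro x
    by_cases hx : x = 0
    · have : (fun _ => (0:ℝ)) =ᶠ[𝓝 x] fun x => chi (3 * gauge S x) / chi 3 := by
        have hU : IsOpen {x | 3 * gauge S x < 1} :=
          isOpen_lt (continuous_const.mul hcont) continuous_const
        filter_upwards [hU.mem_nhds (by simp [hx])] with y hy
        have hy' : 3 * gauge S y < 1 := hy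
        rw [chi_zero hy'.le, zero_div]
      exact contDiffAt_const.congr_of_eventuallyEq this.symm
    · have := gauge_smooth hf hS ho hc hb h0 hd hx
      exact ((chi_smooth.contDiffAt.comp x (contDiffAt_const.mul this))).div_const _
  · refine ⟨convex_univ, fun x _ y _ a b ha hb hab => ?_⟩
    simp only [smul_eq_mul]
    have g1 : gauge S (a • x + b • y) ≤ a * gauge S x + b * gauge S y := by
      refine (gauge_add_le hc habs _ _).trans (le_of_eq ?_)
      rw [gauge_smul_of_nonneg ha, gauge_smul_of_nonneg hb]; rfl
    have g2 := chi_convex.2 (mem_univ (3 * gauge S x)) (mem_univ (3 * gauge S y)) ha hb hab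
    simp only [smul_eq_mul] at g2
    have g3 : chi (3 * gauge S (a • x + b • y)) ≤ chi (a * (3 * gauge S x) + b * (3 * gauge S y)) :=
      chi_mono (by linarith)
    rw [div_le_iff₀ h3]
    calc _ ≤ _ := g3.trans g2
      _ = _ := by field_simp
  · ext x
    have e : x ∈ S ↔ gauge S x < 1 := by
      rw [gauge_lt_one_iff_mem_interior hc hn, ho.interior_eq]
    rw [e]
    simp only [mem_ofPred_eq]
    rw [div_lt_one h3]
    constructor
    · intro h
      have g2 := chi_convex.2 (mem_univ (3:ℝ)) (mem_univ (0:ℝ)) (gauge_nonneg (s := S) x)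
        (sub_nonneg.2 h.le) (by ring)
      simp only [smul_eq_mul, mul_zero, add_zero, chi_zero zero_le_one] at g2
      rw [mul_comm 3]
      nlinarith
    · intro h
      by_contra hne
      push Not at hne
      exact absurd (chi_mono (show (3:ℝ) ≤ 3 * gauge S x by linarith)) (not_le.2 h)

lemma hess_nonneg {d : ℕ} {q : Euc d → ℝ} (hq : ContDiff ℝ (⊤ : ℕ∞) q) (hc : ConvexOn ℝ univ q)
    (x v : Euc d) : 0 ≤ fderiv ℝ (fderiv ℝ q) x v v := by
  have hl : ∀ t : ℝ, HasDerivAt (fun t : ℝ => x + t • v) v t := fun t => by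
    simpa using ((hasDerivAt_id t).smul_const v).const_add x
  have h1 : ∀ t : ℝ, HasDerivAt (fun t : ℝ => q (x + t • v)) (fderiv ℝ q (x + t • v) v) t := fun t =>
    (hq.differentiable (by simp) (x + t • v)).hasFDerivAt.comp_hasDerivAt t (hl t)
  have hcv : ConvexOn ℝ univ (fun t : ℝ => q (x + t • v)) := by
    refine ⟨convex_univ, fun s _ t _ a b ha hb hab => ?_⟩
    have := hc.2 (mem_univ (x + s • v)) (mem_univ (x + t • v)) ha hb hab
    convert this using 2
    have : x = (a + b) • x := by rw [hab, one_smul]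
    nth_rewrite 1 [this]
    simp only [smul_eq_mul]
    module
  have hm := hcv.monotoneOn_deriv (fun t _ => (h1 t).differentiableAt)
  have hd : deriv (fun t : ℝ => q (x + t • v)) = fun t => fderiv ℝ q (x + t • v) v :=
    funext fun t => (h1 t).deriv
  rw [hd, monotoneOn_univ] at hm
  have hdd : DifferentiableAt ℝ (fderiv ℝ q) (x + (0:ℝ) • v) :=
    (hq.fderiv_right (m := (⊤ : ℕ∞)) (by simp)).differentiable (by simp) _
  have h2 := hdd.hasFDerivAt.comp_hasDerivAt (0:ℝ) (hl 0)
  have h3 := h2.clm_apply (hasDerivAt_const (0:ℝ) v)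
  have h4 := HasDerivAt.nonneg_of_monotone h3 hm
  simpa using h4

lemma pd_pd_cx {d : ℕ} {η : Euc d → ℝ} (hη : ContDiff ℝ (⊤ : ℕ∞) η) (i j : Fin d) (x : Euc d) :
    pd i (pd j (cx η)) x = ((fderiv ℝ (fderiv ℝ η) x (EuclideanSpace.single i (1:ℝ))
      (EuclideanSpace.single j (1:ℝ)) : ℝ) : ℂ) := by
  have e : pd j (cx η) = cx (fun y => fderiv ℝ η y (EuclideanSpace.single j (1:ℝ))) :=
    funext fun y => pd_cx (hη.differentiable (by simp) y) j
  have hd : DifferentiableAt ℝ (fderiv ℝ η) x :=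
    (hη.fderiv_right (m := (⊤ : ℕ∞)) (by simp)).differentiable (by simp) x
  have h1 := hd.hasFDerivAt.clm_apply (hasFDerivAt_const (EuclideanSpace.single j (1:ℝ)) x)
  rw [e, pd_cx h1.differentiableAt, h1.fderiv]
  simp

lemma conc_of {d : ℕ} {Ω : Set (Euc d)} {η : Euc d → ℝ} (hη : ContDiff ℝ (⊤ : ℕ∞) η)
    (hc : ConvexOn ℝ univ (fun x => - η x)) : Conc Ω η := by
  intro x _ z
  set H : Fin d → Fin d → ℝ := fun i j => fderiv ℝ (fderiv ℝ η) x (EuclideanSpace.single i (1:ℝ))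
      (EuclideanSpace.single j (1:ℝ)) with hH
  have hsym : ∀ i j, H i j = H j i := by
    intro i j
    have := pd_comm' (cx_smooth hη) i j x
    rw [pd_pd_cx hη, pd_pd_cx hη] at this
    exact_mod_cast this
  have hneg : ∀ i j, ∀ s t : ℝ, t^2 * H i i + s^2 * H j j - 2 * (s * t) * H i j ≤ 0 := by
    intro i j s t
    have hn := hess_nonneg hη.neg hc x (t • EuclideanSpace.single i (1:ℝ)
      - s • EuclideanSpace.single j (1:ℝ))
    have e1 : fderiv ℝ (fun x => - η x) = fun y => - fderiv ℝ η y := by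
      funext y; exact fderiv_fun_neg
    have e2 : fderiv ℝ (fun y => - fderiv ℝ η y) x = - fderiv ℝ (fderiv ℝ η) x := fderiv_fun_neg
    rw [e1, e2] at hn
    simp only [ContinuousLinearMap.neg_apply, map_sub, map_smul, ContinuousLinearMap.sub_apply,
      ContinuousLinearMap.smul_apply, smul_eq_mul] at hn
    have h3 := hsym i j
    simp only [hH] at h3 ⊢
    rw [← h3] at hn
    nlinarith
  simp only [pd_pd_cx hη]
  have e : (∑ i, ∑ j, (((fderiv ℝ (fderiv ℝ η) x (EuclideanSpace.single i (1:ℝ))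
      (EuclideanSpace.single j (1:ℝ)) : ℝ) : ℂ) * z i * (starRingEnd ℂ) (z j)
        - ((fderiv ℝ (fderiv ℝ η) x (EuclideanSpace.single i (1:ℝ))
      (EuclideanSpace.single i (1:ℝ)) : ℝ) : ℂ) * z j * (starRingEnd ℂ) (z j))).re
      = ∑ i, ∑ j, (H i j * ((z i).re * (z j).re + (z i).im * (z j).im)
        - H i i * ((z j).re^2 + (z j).im^2)) := by
    rw [Complex.re_sum]
    refine Finset.sum_congr rfl fun i _ => ?_
    rw [Complex.re_sum]
    refine Finset.sum_congr rfl fun j _ => ?_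
    simp [Complex.mul_re, Complex.mul_im, hH]
    ring
  rw [e]
  have e2 : ∑ i, ∑ j, (H i j * ((z i).re * (z j).re + (z i).im * (z j).im)
        - H i i * ((z j).re^2 + (z j).im^2))
      = ∑ i, ∑ j, (H i j * ((z i).re * (z j).re + (z i).im * (z j).im)
        - H j j * ((z i).re^2 + (z i).im^2)) := by
    rw [Finset.sum_comm]
    refine Finset.sum_congr rfl fun i _ => Finset.sum_congr rfl fun j _ => ?_
    rw [hsym j i]; ring
  have h2 : 0 ≤ ∑ i, ∑ j, (H i j * ((z i).re * (z j).re + (z i).im * (z j).im)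
        - H i i * ((z j).re^2 + (z j).im^2)) + ∑ i, ∑ j,
          (H i j * ((z i).re * (z j).re + (z i).im * (z j).im)
        - H j j * ((z i).re^2 + (z i).im^2)) := by
    simp only [← Finset.sum_add_distrib]
    refine Finset.sum_nonneg fun i _ => Finset.sum_nonneg fun j _ => ?_
    have a1 := hneg i j (z i).re (z j).re
    have a2 := hneg i j (z i).im (z j).im
    nlinarith
  linarith

lemma exists_eta {d : ℕ} {Ω : Set (Euc d)} (hΩ : Dom Ω) (hs : HasSmoothBoundary Ω) :
    ∃ η : ℕ → Euc d → ℝ, (∀ k, ContDiff ℝ (⊤ : ℕ∞) (η k)) ∧ (∀ k, Ω = {x | 0 < η k x}) ∧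
      (∀ k, Conc Ω (η k)) ∧ (∀ k, ∀ x ∈ Ω, η k x ≤ 1) ∧
      (∀ x ∈ Ω, Tendsto (fun k => η k x) atTop (𝓝 1)) := by
  obtain ⟨f, hf, hfΩ, hfd⟩ := hs
  obtain ⟨x0, hx0⟩ := hΩ.n
  let T : Euc d ≃ₜ Euc d := Homeomorph.addLeft x0
  have hTs : ∀ y, T y = x0 + y := fun y => rfl
  obtain ⟨ψ, p1, p2, p3, p4⟩ := exists_psi (S := T ⁻¹' Ω) (f := fun y => f (x0 + y))
    (hf.comp (contDiff_const.add contDiff_id)) (by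
      ext y
      have : y ∈ T ⁻¹' Ω ↔ x0 + y ∈ Ω := Iff.rfl
      rw [this, hfΩ]; rfl) (hΩ.o.preimage T.continuous) (hΩ.c.translate_preimage_right x0) (by
      obtain ⟨R, hR⟩ := hΩ.b.subset_closedBall 0
      refine (Metric.isBounded_closedBall (x := (0:Euc d)) (r := R + ‖x0‖)).subset fun y hy => ?_
      have h1 : x0 + y ∈ Ω := hy
      have h2 := hR h1
      rw [mem_closedBall_zero_iff] at h2 ⊢
      have h3 := norm_sub_le (x0 + y) x0
      rw [add_sub_cancel_left] at h3
      linarith) (by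
      have : (0:Euc d) ∈ T ⁻¹' Ω ↔ x0 + 0 ∈ Ω := Iff.rfl
      rw [this]; simpa using hx0) (by
      intro y hy
      rw [← T.preimage_frontier] at hy
      rw [fderiv_comp_add_left]
      exact hfd _ hy)
  have q4 : ∀ x, x ∈ Ω ↔ ψ (x - x0) < 1 := by
    intro x
    have h1 := Set.ext_iff.1 p4 (x - x0)
    have h2 : x - x0 ∈ T ⁻¹' Ω ↔ x0 + (x - x0) ∈ Ω := Iff.rfl
    rw [h2, add_sub_cancel] at h1
    exact h1
  have sm : ∀ k : ℕ, ContDiff ℝ (⊤ : ℕ∞) (fun x => 1 - ψ (x - x0) ^ (k+1)) := fun k =>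
    contDiff_const.sub ((p1.comp (contDiff_id.sub contDiff_const)).pow _)
  refine ⟨fun k x => 1 - ψ (x - x0) ^ (k+1), sm, fun k => ?_, fun k => ?_, fun k x _ => ?_,
    fun x hx => ?_⟩
  · ext x
    rw [q4]
    simp only [mem_ofPred_eq, sub_pos]
    exact (pow_lt_one_iff_of_nonneg (p3 _) (by simp)).symm
  · refine conc_of (sm k) ?_
    have hp := p2.pow (fun y _ => p3 y) (k+1)
    refine ⟨convex_univ, fun x _ y _ a b ha hb hab => ?_⟩
    have := hp.2 (mem_univ (x - x0)) (mem_univ (y - x0)) ha hb hab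
    have e : a • (x - x0) + b • (y - x0) = a • x + b • y - x0 := by
      have : x0 = (a + b) • x0 := by rw [hab, one_smul]
      nth_rewrite 3 [this]
      module
    rw [e] at this
    simp only [Pi.pow_apply, smul_eq_mul] at this ⊢
    linarith
  · have := pow_nonneg (p3 (x - x0)) (k+1)
    simp only; linarith
  · have h1 := (tendsto_pow_atTop_nhds_zero_of_lt_one (p3 (x - x0)) ((q4 x).1 hx)).comp
      (tendsto_add_atTop_nat 1)
    simpa using h1.const_sub 1

structure EpsD {d : ℕ} (Ω : Set (Euc d)) (ε : Euc d → ℂ) (K E : ℝ) : Prop where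
  di : ∀ x ∈ Ω, DifferentiableAt ℝ ε x
  b : ∀ x ∈ Ω, ‖ε x‖ ≤ K
  db : ∀ x ∈ Ω, ∀ i : Fin d, ‖pd i ε x‖ ≤ E

lemma EpsD.mulm {d : ℕ} {Ω : Set (Euc d)} {ε : Euc d → ℂ} {K E : ℝ} (ho : IsOpen Ω)
    (h : EpsD Ω ε K E) {f : Euc d → ℂ} (hf : MemL2 Ω f) : MemL2 Ω (fun x => ε x * f x) := by
  have hc : ContinuousOn ε Ω := fun x hx => (h.di x hx).continuousAt.continuousWithinAt
  exact hf.bdd_mul' (hc.aestronglyMeasurable ho.measurableSet) (C := K)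
    ((ae_restrict_iff' ho.measurableSet).2 (Eventually.of_forall h.b))

lemma EpsD.mulp {d : ℕ} {Ω : Set (Euc d)} {ε : Euc d → ℂ} {K E : ℝ} (ho : IsOpen Ω)
    (h : EpsD Ω ε K E) {f : Euc d → ℂ} (hf : MemL2 Ω f) (i : Fin d) :
    MemL2 Ω (fun x => pd i ε x * f x) := by
  exact hf.bdd_mul' (measurable_fderiv_apply_const ℝ ε _).aestronglyMeasurable (C := E)
    ((ae_restrict_iff' ho.measurableSet).2 (Eventually.of_forall fun x hx => h.db x hx i))

lemma EpsD.ibp0 {d : ℕ} {Ω : Set (Euc d)} {ε : Euc d → ℂ} {K E : ℝ} (ho : IsOpen Ω)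
    (hb : Bornology.IsBounded Ω)
    (h : EpsD Ω ε K E) {χ : Euc d → ℂ} (hχ : IsTestFun Ω χ) (i : Fin d) :
    ∫ x in Ω, ε x * pd i χ x = - ∫ x in Ω, pd i ε x * χ x := by
  have key : ∀ F : Euc d → ℂ, (∀ x, x ∉ Ω → F x = 0) → ∫ x in Ω, F x = ∫ x, F x := fun F hF =>
    setIntegral_eq_integral_of_forall_compl_eq_zero hF
  have fin : ∀ F : Euc d → ℂ, MemL2 Ω F → IntegrableOn F Ω volume := fun F hF => by
    have hfin : volume Ω ≠ ⊤ := hb.measure_lt_top.ne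
    have : IsFiniteMeasure (volume.restrict Ω) := ⟨by simpa using hfin.lt_top⟩
    exact MemLp.integrable (by norm_num) hF
  have fin2 : ∀ F : Euc d → ℂ, MemL2 Ω F → (∀ x, x ∉ Ω → F x = 0) → Integrable F volume :=
    fun F hF h0 => (fin F hF).integrable_of_forall_notMem_eq_zero h0
  have z1 : ∀ x, x ∉ Ω → χ x = 0 := fun x hx => test_zero_off hχ hx
  have z2 : ∀ x, x ∉ Ω → pd i χ x = 0 := fun x hx => test_zero_off (hχ.pd i) hx
  rw [key _ fun x hx => by rw [z2 x hx, mul_zero], key _ fun x hx => by rw [z1 x hx, mul_zero]]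
  exact integral_mul_fderiv_eq_neg_fderiv_mul_of_integrable
    (fin2 _ (h.mulp ho hχ.mem i) fun x hx => by rw [z1 x hx, mul_zero])
    (fin2 _ (h.mulm ho (hχ.pd i).mem) fun x hx => by
      exact mul_eq_zero_of_right _ (z2 x hx))
    (fin2 _ (h.mulm ho hχ.mem) fun x hx => by rw [z1 x hx, mul_zero])
    (fun x hx => h.di x (hχ.2.2 hx)) (fun x _ => sm_diff hχ.1 x)

lemma EpsD.test {d : ℕ} {Ω : Set (Euc d)} {ε : Euc d → ℂ} {K E : ℝ} (ho : IsOpen Ω)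
    (hb : Bornology.IsBounded Ω)
    (h : EpsD Ω ε K E) {φ : Euc d → ℂ} (hφ : IsTestFun Ω φ) :
    H10f Ω (fun x => ε x * φ x) (fun i x => pd i ε x * φ x + ε x * pd i φ x) := by
  refine ⟨h.mulm ho hφ.mem, fun i => (h.mulp ho hφ.mem i).add' (h.mulm ho (hφ.pd i).mem),
    fun i ψ hψ => ?_⟩
  have hχ : IsTestFun Ω (fun x => ψ x * φ x) := IsTestFun.mul hψ.1 hφ
  have e := h.ibp0 ho hb hχ i
  have e1 : ∀ x, ε x * pd i (fun x => ψ x * φ x) x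
      = (ε x * φ x) * pd i ψ x + (ε x * pd i φ x) * ψ x := fun x => by
    rw [pd_mul (sm_diff hψ.1 x) (sm_diff hφ.1 x)]; ring
  have e2 : ∀ x, pd i ε x * (ψ x * φ x) = (pd i ε x * φ x) * ψ x := fun x => by ring
  simp only [e1, e2] at e
  rw [integral_add ((h.mulm ho hφ.mem).mulInt (hψ.pd i).mem)
    ((h.mulm ho (hφ.pd i).mem).mulInt hψ.mem)] at e
  simp only [add_mul]
  rw [integral_add ((h.mulp ho hφ.mem i).mulInt hψ.mem)
    ((h.mulm ho (hφ.pd i).mem).mulInt hψ.mem)]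
  linear_combination e

lemma EpsD.wd {d : ℕ} {Ω : Set (Euc d)} {ε : Euc d → ℂ} {K E : ℝ} (hΩ : Dom Ω)
    (h : EpsD Ω ε K E) {a a' : Euc d → ℂ} {i : Fin d} (ha : MemL2 Ω a) (ha' : MemL2 Ω a')
    (hw : IsWeakDeriv Ω i a a') :
    IsWeakDeriv Ω i (fun x => ε x * a x) (fun x => pd i ε x * a x + ε x * a' x) := by
  intro φ hφ
  have e := (h.test hΩ.o hΩ.b hφ).ibp hΩ ha ha' hw
  have e1 : ∀ x, a x * (pd i ε x * φ x + ε x * pd i φ x)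
      = (pd i ε x * a x) * φ x + (ε x * a x) * pd i φ x := fun x => by ring
  have e2 : ∀ x, a' x * (ε x * φ x) = (ε x * a' x) * φ x := fun x => by ring
  simp only [e1, e2] at e
  rw [integral_add ((h.mulp hΩ.o ha i).mulInt hφ.mem)
    ((h.mulm hΩ.o ha).mulInt (hφ.pd i).mem)] at e
  simp only [add_mul]
  rw [integral_add ((h.mulp hΩ.o ha i).mulInt hφ.mem) ((h.mulm hΩ.o ha').mulInt hφ.mem)]
  linear_combination e

lemma wd_of_zero {d : ℕ} {Ω : Set (Euc d)} (ho : IsOpen Ω) {u a : Euc d → ℂ} {i : Fin d}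
    (ha : MemL2 Ω a) (hw : IsWeakDeriv Ω i u a) (h0 : ∀ᵐ x ∂(volume.restrict Ω), u x = 0) :
    ∀ᵐ x ∂(volume.restrict Ω), a x = 0 := by
  refine memL2_ae_of ho (wd_zero ho ha.locInt fun φ hφ => ?_)
  have e := hw φ hφ
  have : ∫ x in Ω, u x * pd i φ x = 0 := by
    rw [integral_congr_ae (g := fun _ => 0) (h0.mono fun x hx => by simp [hx])]
    simp
  rw [this] at e
  exact neg_eq_zero.1 e.symm

lemma L2N_zero {d : ℕ} {Ω : Set (Euc d)} {u : Euc d → ℂ}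
    (h0 : ∀ᵐ x ∂(volume.restrict Ω), u x = 0) : L2N Ω u = 0 := by
  unfold L2N
  rw [eLpNorm_congr_ae (g := fun _ => 0) h0]
  simp

lemma L2N_eq_zero {d : ℕ} {Ω : Set (Euc d)} {u : Euc d → ℂ} (hu : MemL2 Ω u)
    (h0 : ∫ x in Ω, ‖u x‖^2 = 0) : ∀ᵐ x ∂(volume.restrict Ω), u x = 0 := by
  have := (integral_eq_zero_iff_of_nonneg (fun x => by positivity) hu.sqInt).1 h0
  exact this.mono fun x hx => by simpa using hx

/-- non-locally-integrable divergence datum forces everything to vanish -/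
lemma bad_zero {d : ℕ} {Ω : Set (Euc d)} {ε : Euc d → ℂ} {K E θ : ℝ} (hΩ : Dom Ω) (hθ : 0 < θ)
    (h : EpsD Ω ε K E) (hl : ∀ x ∈ Ω, θ ≤ (ε x).re) {u : Euc d → ℂ} {a : Fin d → Euc d → ℂ}
    (hu : H10f Ω u a) {i : Fin d} (hT : ∀ φ, IsTestFun Ω φ → ∫ x in Ω, (ε x * a i x) * pd i φ x = 0) :
    ∀ᵐ x ∂(volume.restrict Ω), u x = 0 := by
  have e := hu.conj.ibp hΩ (h.mulm hΩ.o (hu.m' i)) (a' := fun _ => 0) (MemLp.zero' ) (i := i)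
    (fun φ hφ => by rw [hT φ hφ]; simp)
  simp only [zero_mul, integral_zero, neg_zero, mul_assoc, mul_conj_sq] at e
  have hre := congrArg Complex.re e
  have hI := (h.mulm hΩ.o (hu.m' i)).mulInt (hu.m' i).conj
  simp only [mul_assoc, mul_conj_sq] at hI
  have h1 : ∫ x in Ω, (ε x * ((‖a i x‖^2 : ℝ) : ℂ)).re = 0 := by
    have := integral_re hI
    simp only [RCLike.re_to_complex] at this
    rw [this, e]; simp
  have ha0 : ∀ᵐ x ∂(volume.restrict Ω), a i x = 0 := by
    refine L2N_eq_zero (hu.m' i) (le_antisymm ?_ (integral_nonneg fun x => by positivity))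
    have : ∫ x in Ω, θ * ‖a i x‖^2 ≤ ∫ x in Ω, (ε x * ((‖a i x‖^2 : ℝ) : ℂ)).re := by
      refine integral_mono_ae ((hu.m' i).sqInt.const_mul _) (Integrable.re hI)
        ((ae_restrict_iff' hΩ.o.measurableSet).2 (Eventually.of_forall fun x hx => ?_))
      simp only [Complex.re_mul_ofReal]
      exact mul_le_mul_of_nonneg_right (hl x hx) (by positivity)
    rw [integral_const_mul, h1] at this
    exact nonpos_of_mul_nonpos_right this hθ
  have hcx : ContDiff ℝ (⊤ : ℕ∞) (fun x : Euc d => ((x i : ℝ) : ℂ)) :=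
    Complex.ofRealCLM.contDiff.comp (EuclideanSpace.proj (𝕜 := ℝ) i).contDiff
  have hpd : ∀ x : Euc d, pd i (fun x : Euc d => ((x i : ℝ) : ℂ)) x = 1 := by
    intro x
    have : HasFDerivAt (fun x : Euc d => ((x i : ℝ) : ℂ))
      (Complex.ofRealCLM.comp (EuclideanSpace.proj (𝕜 := ℝ) i)) x :=
      (Complex.ofRealCLM.comp (EuclideanSpace.proj (𝕜 := ℝ) i)).hasFDerivAt
    unfold pd
    rw [this.fderiv]; simp
  have hs := hu.toH1f.smul hΩ hcx
  have e3 := hu.conj.ibp hΩ hs.m (hs.m' i) (hs.w i)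
  have f1 : ∫ x in Ω, (pd i (fun x : Euc d => ((x i : ℝ) : ℂ)) x * u x + ((x i : ℝ) : ℂ) * a i x)
      * (starRingEnd ℂ) (u x) = ∫ x in Ω, ((‖u x‖^2 : ℝ) : ℂ) :=
    integral_congr_ae (ha0.mono fun x hx => by
      simp only [hx, hpd, mul_zero, add_zero, one_mul, mul_conj_sq])
  rw [f1, integral_congr_ae (g := fun _ => 0) (ha0.mono fun x hx => by simp [hx])] at e3
  rw [integral_complex_ofReal] at e3
  refine L2N_eq_zero hu.m ?_
  simp only [integral_zero] at e3
  exact Complex.ofReal_eq_zero.1 (neg_eq_zero.1 e3.symm)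

lemma good_eq {d : ℕ} {Ω : Set (Euc d)} (ho : IsOpen Ω) {w v g : Euc d → ℂ} {i : Fin d}
    (hw : MemL2 Ω w) (hv : MemL2 Ω v) (hwv : IsWeakDeriv Ω i w v) (hwg : IsWeakDeriv Ω i w g) :
    (∀ φ, IsTestFun Ω φ → ∫ x in Ω, w x * pd i φ x = 0) ∨
      ∀ᵐ x ∂(volume.restrict Ω), g x = v x := by
  by_cases hall : ∀ φ, IsTestFun Ω φ → IntegrableOn (fun x => g x * φ x) Ω volume
  · right
    have hloc : LocallyIntegrableOn g Ω volume := by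
      intro x hx
      obtain ⟨r, hr, hrΩ⟩ := Metric.isOpen_iff.1 ho x hx
      let ρ : ContDiffBump x := ⟨r/4, r/2, by positivity, by linarith⟩
      have ht : IsTestFun Ω (fun y => ((ρ y : ℝ) : ℂ)) := by
        have hsupp : tsupport (fun y => ((ρ y : ℝ) : ℂ)) ⊆ Metric.closedBall x (r/2) := by
          refine closure_minimal (fun y hy => ?_) Metric.isClosed_closedBall
          have : y ∈ Function.support ρ := by
            intro h0; apply hy; simp [h0]
          rw [ρ.support_eq] at this
          exact Metric.ball_subset_closedBall this
        refine ⟨Complex.ofRealCLM.contDiff.comp ρ.contDiff, ?_, ?_⟩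
        · exact HasCompactSupport.of_support_subset_isCompact (isCompact_closedBall x (r/2))
            ((subset_tsupport _).trans hsupp)
        · exact hsupp.trans ((Metric.closedBall_subset_ball (by linarith)).trans hrΩ)
      refine ⟨Ω ∩ Metric.closedBall x (r/4),
        inter_mem_nhdsWithin _ (Metric.closedBall_mem_nhds x (by positivity)), ?_⟩
      refine ((hall _ ht).mono_set inter_subset_left).congr_fun (fun y hy => ?_)
        (ho.measurableSet.inter Metric.isClosed_closedBall.measurableSet)
      have : ρ y = 1 := ρ.one_of_mem_closedBall hy.2
      simp [this]
    have := memL2_ae_of ho (wd_zero ho (f := fun x => g x - v x) (hloc.sub hv.locInt)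
      fun φ hφ => by
        simp only [sub_mul]
        rw [integral_sub (hall φ hφ) (hv.mulInt hφ.mem)]
        have e1 := hwv φ hφ
        have e2 := hwg φ hφ
        linear_combination e2 - e1)
    exact this.mono fun x hx => sub_eq_zero.1 hx
  · left
    push Not at hall
    obtain ⟨φ0, h0, hn⟩ := hall
    have bad : ∀ φ, IsTestFun Ω φ → ¬ IntegrableOn (fun x => g x * φ x) Ω volume →
        ∫ x in Ω, w x * pd i φ x = 0 := fun φ hφ hb => by
      rw [hwg φ hφ, integral_undef hb, neg_zero]
    intro φ hφ
    by_cases hg : IntegrableOn (fun x => g x * φ x) Ω volume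
    · have hadd : IsTestFun Ω (fun x => φ x + φ0 x) := by
        refine ⟨hφ.1.add h0.1, hφ.2.1.add h0.2.1, ?_⟩
        exact (tsupport_add φ φ0).trans (union_subset hφ.2.2 h0.2.2)
      have e := bad _ hadd (fun hI => hn (by
        have := hI.sub hg
        refine this.congr (Eventually.of_forall fun x => ?_)
        simp only [Pi.sub_apply]; ring))
      have e0 := bad _ h0 hn
      have e1 : ∀ x, w x * pd i (fun x => φ x + φ0 x) x = w x * pd i φ x + w x * pd i φ0 x := by
        intro x
        have : pd i (fun x => φ x + φ0 x) x = pd i φ x + pd i φ0 x := by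
          unfold pd
          rw [fderiv_fun_add (sm_diff hφ.1 x) (sm_diff h0.1 x)]; rfl
        rw [this]; ring
      simp only [e1] at e
      rw [integral_add (hw.mulInt (hφ.pd i).mem) (hw.mulInt (h0.pd i).mem), e0, add_zero] at e
      exact e
    · exact bad φ hφ hg

lemma L2N_mono {d : ℕ} {Ω : Set (Euc d)} {f g : Euc d → ℂ} (hf : MemL2 Ω f) {C : ℝ} (hC : 0 ≤ C)
    (h : ∀ᵐ x ∂(volume.restrict Ω), ‖g x‖ ≤ C * ‖f x‖) : L2N Ω g ≤ C * L2N Ω f := by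
  unfold L2N
  have h1 := eLpNorm_le_mul_eLpNorm_of_ae_le_mul h 2
  have h2 := ENNReal.toReal_mono (ENNReal.mul_ne_top ENNReal.ofReal_ne_top hf.2.ne) h1
  rwa [ENNReal.toReal_mul, ENNReal.toReal_ofReal hC] at h2

lemma L2N_add {d : ℕ} {Ω : Set (Euc d)} {f g : Euc d → ℂ} (hf : MemL2 Ω f) (hg : MemL2 Ω g) :
    L2N Ω (fun x => f x + g x) ≤ L2N Ω f + L2N Ω g := by
  unfold L2N
  rw [← ENNReal.toReal_add hf.2.ne hg.2.ne]
  exact ENNReal.toReal_mono (ENNReal.add_ne_top.2 ⟨hf.2.ne, hg.2.ne⟩)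
    (eLpNorm_add_le hf.1 hg.1 (by norm_num))

lemma L2N_cs {d : ℕ} {Ω : Set (Euc d)} {f g : Euc d → ℂ} (hf : MemL2 Ω f) (hg : MemL2 Ω g) :
    ‖∫ x in Ω, f x * (starRingEnd ℂ) (g x)‖ ≤ L2N Ω f * L2N Ω g := by
  have h1 := integral_mul_norm_le_Lp_mul_Lq (μ := volume.restrict Ω) (f := f) (g := g)
    (p := 2) (q := 2) Real.HolderConjugate.two_two (by simpa [MemL2] using hf) (by simpa [MemL2] using hg)
  have e : ∀ f : Euc d → ℂ, MemL2 Ω f →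
      (∫ x in Ω, ‖f x‖ ^ (2:ℝ)) ^ (1 / (2:ℝ)) = L2N Ω f := fun f hf => by
    simp only [Real.rpow_ofNat]
    rw [← L2N_sq hf, ← Real.sqrt_eq_rpow, Real.sqrt_sq (L2N_nonneg _ _)]
  rw [e f hf, e g hg] at h1
  refine (norm_integral_le_integral_norm _).trans ?_
  simpa using h1

lemma energy {d : ℕ} {Ω : Set (Euc d)} (hΩ : Dom Ω) {u : Euc d → ℂ} {a : Fin d → Euc d → ℂ}
    (hu : H10f Ω u a) {w v : Fin d → Euc d → ℂ} (hw : ∀ i, MemL2 Ω (w i)) (hv : ∀ i, MemL2 Ω (v i))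
    (hwv : ∀ i, IsWeakDeriv Ω i (w i) (v i)) :
    ∑ i, ∫ x in Ω, w i x * (starRingEnd ℂ) (a i x)
      = - ∫ x in Ω, (∑ i, v i x) * (starRingEnd ℂ) (u x) := by
  simp only [Finset.sum_mul]
  rw [integral_finsetSum _ fun i _ => (hv i).mulInt hu.m.conj, ← Finset.sum_neg_distrib]
  exact Finset.sum_congr rfl fun i _ => hu.conj.ibp hΩ (hw i) (hv i) (hwv i)

lemma int_sq {d : ℕ} {Ω : Set (Euc d)} {f : Euc d → ℂ} (hf : MemL2 Ω f) :
    ∫ x in Ω, f x * (starRingEnd ℂ) (f x) = (((L2N Ω f)^2 : ℝ) : ℂ) := by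
  simp only [mul_conj_sq]
  rw [integral_complex_ofReal, ← L2N_sq hf]

lemma grad_lap {d : ℕ} {Ω : Set (Euc d)} (hΩ : Dom Ω) {u : Euc d → ℂ} {a : Fin d → Euc d → ℂ}
    (hu : H10f Ω u a) {v : Fin d → Euc d → ℂ} (hv : ∀ i, MemL2 Ω (v i))
    (hwv : ∀ i, IsWeakDeriv Ω i (a i) (v i)) :
    ∑ i, (L2N Ω (a i))^2 ≤ L2N Ω (fun x => ∑ i, v i x) * L2N Ω u := by
  have e := energy hΩ hu hu.m' hv hwv
  simp only [fun i => int_sq (hu.m' i)] at e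
  rw [← Complex.ofReal_sum] at e
  have h1 := L2N_cs (MemL2.sum' hv) hu.m
  rw [← norm_neg, ← e, Complex.norm_real] at h1
  exact (le_abs_self _).trans h1

lemma re_low {d : ℕ} {Ω : Set (Euc d)} {f g : Euc d → ℂ} {t : ℝ} (hf : MemL2 Ω f)
    (hgf : MemL2 Ω (fun x => g x * f x)) (h : ∀ᵐ x ∂(volume.restrict Ω), t ≤ (g x).re) :
    t * (L2N Ω f)^2 ≤ (∫ x in Ω, (g x * f x) * (starRingEnd ℂ) (f x)).re := by
  have hI := hgf.mulInt hf.conj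
  have := integral_re hI
  simp only [RCLike.re_to_complex] at this
  rw [← this, L2N_sq hf, ← integral_const_mul]
  refine integral_mono_ae (hf.sqInt.const_mul _) (Integrable.re hI) (h.mono fun x hx => ?_)
  simp only [mul_assoc, mul_conj_sq, RCLike.re_to_complex, Complex.re_mul_ofReal]
  exact mul_le_mul_of_nonneg_right hx (by positivity)

lemma coer {d : ℕ} {Ω : Set (Euc d)} {ε κ2 : Euc d → ℂ} {K E θ μ : ℝ} (hΩ : Dom Ω)
    (h : EpsD Ω ε K E) (hl : ∀ x ∈ Ω, θ ≤ (ε x).re) (hκL : MemLp κ2 ⊤ (volume.restrict Ω))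
    (hκ : ∀ᵐ x ∂(volume.restrict Ω), -μ ≤ (κ2 x).re)
    {u : Euc d → ℂ} {a : Fin d → Euc d → ℂ} {v : Fin d → Euc d → ℂ}
    (hu : H10f Ω u a) (hv : ∀ i, MemL2 Ω (v i))
    (hwv : ∀ i, IsWeakDeriv Ω i (fun x => ε x * a i x) (v i))
    (hκu : MemL2 Ω (fun x => κ2 x * u x)) :
    θ * ∑ i, (L2N Ω (a i))^2 - μ * (L2N Ω u)^2 ≤
      L2N Ω (fun x => -(∑ i, v i x) + κ2 x * u x) * L2N Ω u := by
  have e := energy hΩ hu (fun i => h.mulm hΩ.o (hu.m' i)) hv hwv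
  have hs : MemL2 Ω (fun x => ∑ i, v i x) := MemL2.sum' hv
  have hF : MemL2 Ω (fun x => -(∑ i, v i x) + κ2 x * u x) := MemL2.add' (MemLp.neg hs) hκu
  have h1 := L2N_cs hF hu.m
  have e2 : ∫ x in Ω, (-(∑ i, v i x) + κ2 x * u x) * (starRingEnd ℂ) (u x)
      = ∑ i, (∫ x in Ω, (ε x * a i x) * (starRingEnd ℂ) (a i x))
        + ∫ x in Ω, (κ2 x * u x) * (starRingEnd ℂ) (u x) := by
    rw [e, ← integral_neg]
    refine Eq.trans ?_ (integral_add (hs.mulInt hu.m.conj).neg (hκu.mulInt hu.m.conj))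
    refine integral_congr_ae (Eventually.of_forall fun x => ?_)
    simp only [Pi.neg_apply]; ring
  have hl' : ∀ᵐ x ∂(volume.restrict Ω), θ ≤ (ε x).re :=
    (ae_restrict_iff' hΩ.o.measurableSet).2 (Eventually.of_forall hl)
  have l1 := re_low hu.m hκu hκ
  have l2 := Finset.sum_le_sum fun i (_ : i ∈ (Finset.univ : Finset (Fin d))) =>
    re_low (hu.m' i) (h.mulm hΩ.o (hu.m' i)) hl'
  have e3 := congrArg Complex.re e2
  rw [Complex.add_re, Complex.re_sum] at e3
  rw [← Finset.mul_sum] at l2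
  have := (Complex.re_le_norm _).trans h1
  linarith

lemma lap_bd {d : ℕ} {Ω : Set (Euc d)} {ε κ2 : Euc d → ℂ} {K E θ k : ℝ} (hΩ : Dom Ω) (hθ : 0 < θ)
    (h : EpsD Ω ε K E) (hE : 0 ≤ E) (hl : ∀ x ∈ Ω, θ ≤ (ε x).re) (hk : 0 ≤ k)
    (hκ : ∀ᵐ x ∂(volume.restrict Ω), ‖κ2 x‖ ≤ k)
    {u : Euc d → ℂ} {a : Fin d → Euc d → ℂ} {b : Fin d → Euc d → ℂ}
    (hu : MemL2 Ω u) (ha : ∀ i, MemL2 Ω (a i)) (hb : ∀ i, MemL2 Ω (b i))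
    (hκu : MemL2 Ω (fun x => κ2 x * u x)) :
    θ * L2N Ω (fun x => ∑ i, b i x) ≤
      L2N Ω (fun x => -(∑ i, (pd i ε x * a i x + ε x * b i x)) + κ2 x * u x) + k * L2N Ω u
        + Real.sqrt d * E * Real.sqrt (∑ i, (L2N Ω (a i))^2) := by
  set F : Euc d → ℂ := fun x => -(∑ i, (pd i ε x * a i x + ε x * b i x)) + κ2 x * u x with hFd
  have hs : MemL2 Ω (fun x => ∑ i, (pd i ε x * a i x + ε x * b i x)) :=
    MemL2.sum' fun i => (h.mulp hΩ.o (ha i) i).add' (h.mulm hΩ.o (hb i))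
  have hF : MemL2 Ω F := MemL2.add' (MemLp.neg hs) hκu
  have hP : MemL2 Ω (fun x => ∑ i, pd i ε x * a i x) := MemL2.sum' fun i => h.mulp hΩ.o (ha i) i
  have hΔ : MemL2 Ω (fun x => ∑ i, b i x) := MemL2.sum' hb
  have hεΔ := h.mulm hΩ.o hΔ
  have s1 : L2N Ω (fun x => ∑ i, b i x) ≤ θ⁻¹ * L2N Ω (fun x => ε x * ∑ i, b i x) := by
    refine L2N_mono hεΔ (by positivity)
      ((ae_restrict_iff' hΩ.o.measurableSet).2 (Eventually.of_forall fun x hx => ?_))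
    rw [norm_mul, ← mul_assoc]
    have h1 : θ ≤ ‖ε x‖ := (hl x hx).trans (Complex.re_le_norm _)
    have : 1 ≤ θ⁻¹ * ‖ε x‖ := by
      rw [inv_mul_eq_div, one_le_div hθ]; exact h1
    nlinarith [norm_nonneg (∑ i, b i x)]
  have s2 : L2N Ω (fun x => ε x * ∑ i, b i x) ≤ L2N Ω F + L2N Ω (fun x => κ2 x * u x)
      + L2N Ω (fun x => ∑ i, pd i ε x * a i x) := by
    have e : (fun x => ε x * ∑ i, b i x)
        = fun x => (-F x + κ2 x * u x) + -(∑ i, pd i ε x * a i x) := by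
      funext x
      simp only [hFd, Finset.sum_add_distrib, Finset.mul_sum]
      ring
    rw [e]
    have ng : ∀ f : Euc d → ℂ, L2N Ω (fun x => - f x) = L2N Ω f := fun f => by
      unfold L2N
      exact congrArg ENNReal.toReal (eLpNorm_neg f 2 _)
    have t1 := L2N_add (f := fun x => -F x + κ2 x * u x) (g := fun x => -(∑ i, pd i ε x * a i x))
      (MemL2.add' (MemLp.neg hF) hκu) (MemLp.neg hP)
    have t2 := L2N_add (f := fun x => -F x) (MemLp.neg hF) hκu
    rw [ng] at t1 t2
    linarith
  have s3 : L2N Ω (fun x => κ2 x * u x) ≤ k * L2N Ω u :=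
    L2N_mono hu hk (hκ.mono fun x hx => by
      rw [norm_mul]; exact mul_le_mul_of_nonneg_right hx (norm_nonneg _))
  have s4 : L2N Ω (fun x => ∑ i, pd i ε x * a i x)
      ≤ Real.sqrt d * E * Real.sqrt (∑ i, (L2N Ω (a i))^2) := by
    have : (L2N Ω (fun x => ∑ i, pd i ε x * a i x))^2 ≤ d * E^2 * ∑ i, (L2N Ω (a i))^2 := by
      simp only [L2N_sq hP, fun i => L2N_sq (ha i)]
      rw [← integral_finsetSum _ fun i _ => (ha i).sqInt, ← integral_const_mul]
      refine integral_mono_ae hP.sqInt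
        ((integrable_finsetSum _ fun i _ => (ha i).sqInt).const_mul _)
        ((ae_restrict_iff' hΩ.o.measurableSet).2 (Eventually.of_forall fun x hx => ?_))
      simp only
      have c1 : ‖∑ i, pd i ε x * a i x‖ ≤ E * ∑ i, ‖a i x‖ := by
        rw [Finset.mul_sum]
        refine (norm_sum_le _ _).trans (Finset.sum_le_sum fun i _ => ?_)
        rw [norm_mul]
        exact mul_le_mul_of_nonneg_right (h.db x hx i) (norm_nonneg _)
      have c2 : (∑ i, ‖a i x‖)^2 ≤ d * ∑ i, ‖a i x‖^2 := by
        have := sq_sum_le_card_mul_sum_sq (s := Finset.univ) (f := fun i => ‖a i x‖)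
        simpa using this
      calc _ ≤ (E * ∑ i, ‖a i x‖)^2 := by gcongr
        _ = E^2 * (∑ i, ‖a i x‖)^2 := by ring
        _ ≤ E^2 * (d * ∑ i, ‖a i x‖^2) := by gcongr
        _ = _ := by ring
    have h2 := Real.le_sqrt_of_sq_le this
    rwa [Real.sqrt_mul (by positivity), Real.sqrt_mul (by positivity), Real.sqrt_sq hE] at h2
  have s5 : θ * L2N Ω (fun x => ∑ i, b i x) ≤ L2N Ω (fun x => ε x * ∑ i, b i x) := by
    rw [inv_mul_eq_div, le_div_iff₀ hθ] at s1; linarith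
  linarith

lemma real_est {l θ μ N G D F H k e : ℝ} (hl : 0 < l) (hθ : 0 < θ) (hμ : 0 ≤ μ) (hs : μ / θ < l)
    (hN : 0 ≤ N) (hG : 0 ≤ G) (hD : 0 ≤ D) (hF : 0 ≤ F) (hk : 0 ≤ k) (he : 0 ≤ e)
    (h1 : θ * G^2 - μ * N^2 ≤ F * N) (hP : l * N^2 ≤ G^2) (h2 : G^2 ≤ D * N)
    (h3 : θ * D ≤ F + k * N + e * G) (h4 : H ≤ D^2) :
    Real.sqrt (N^2 + G^2 + H) ≤ (l⁻¹ * (1 + l ^ ((2:ℝ)/3)) ^ ((3:ℝ)/2) / θ)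
        * (1 + (k + e * Real.sqrt l) / (θ * l - μ)) * F := by
  have hq : 0 < θ * l - μ := by
    rw [div_lt_iff₀ hθ] at hs; linarith
  set s := Real.sqrt l with hsd
  have hs0 : 0 < s := Real.sqrt_pos.2 hl
  have hss : s^2 = l := Real.sq_sqrt hl.le
  have hsN : s * N ≤ G := by
    refine abs_le_of_sq_le_sq' ?_ hG |>.2
    rw [mul_pow, hss]; exact hP
  have gG : G ≤ s * F / (θ * l - μ) := by
    rw [le_div_iff₀ hq]
    by_cases hG0 : G = 0
    · rw [hG0, zero_mul]; positivity
    have hGp : 0 < G := lt_of_le_of_ne hG (Ne.symm hG0)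
    have a1 : l * (F * N) ≤ s * F * G := by
      have : s * F * (s * N) ≤ s * F * G := mul_le_mul_of_nonneg_left hsN (by positivity)
      calc l * (F * N) = s * F * (s * N) := by rw [← hss]; ring
        _ ≤ _ := this
    have a2 : μ * (l * N^2) ≤ μ * G^2 := mul_le_mul_of_nonneg_left hP hμ
    have a3 : (G * (θ * l - μ)) * G ≤ (s * F) * G := by nlinarith
    exact le_of_mul_le_mul_right a3 hGp
  have gN : N ≤ F / (θ * l - μ) := by
    have : s * N ≤ s * (F / (θ * l - μ)) := hsN.trans (gG.trans (by rw [mul_div_assoc]))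
    exact le_of_mul_le_mul_left this hs0
  have gD : D ≤ (1 + (k + e * s) / (θ * l - μ)) * F / θ := by
    rw [le_div_iff₀ hθ]
    have b1 : k * N ≤ k * (F / (θ * l - μ)) := mul_le_mul_of_nonneg_left gN hk
    have b2 : e * G ≤ e * (s * F / (θ * l - μ)) := mul_le_mul_of_nonneg_left gG he
    have : (1 + (k + e * s) / (θ * l - μ)) * F
      = F + k * (F / (θ * l - μ)) + e * (s * F / (θ * l - μ)) := by ring
    rw [this]; linarith
  have nD : l * N ≤ D := by
    by_cases hN0 : N = 0
    · rw [hN0, mul_zero]; exact hD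
    have hNp : 0 < N := lt_of_le_of_ne hN (Ne.symm hN0)
    refine le_of_mul_le_mul_right ?_ hNp
    nlinarith
  have n2 : l^2 * N^2 ≤ D^2 := by
    rw [← mul_pow]; exact pow_le_pow_left₀ (by positivity) nD 2
  have g2 : l * G^2 ≤ D^2 := by nlinarith [mul_le_mul_of_nonneg_left nD hD]
  set m := l ^ ((1:ℝ)/3) with hm
  have hm0 : 0 < m := Real.rpow_pos_of_pos hl _
  have hm3 : m^3 = l := by
    rw [hm, ← Real.rpow_natCast, ← Real.rpow_mul hl.le]; norm_num
  have hm2 : l ^ ((2:ℝ)/3) = m^2 := by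
    rw [hm, ← Real.rpow_natCast, ← Real.rpow_mul hl.le]; norm_num
  have hC : Real.sqrt (N^2 + G^2 + H) ≤ l⁻¹ * (1 + l ^ ((2:ℝ)/3)) ^ ((3:ℝ)/2) * D := by
    rw [Real.sqrt_le_left (by positivity)]
    have hp : ((1 + l ^ ((2:ℝ)/3)) ^ ((3:ℝ)/2))^2 = (1 + m^2)^3 := by
      rw [hm2, ← Real.rpow_natCast, ← Real.rpow_mul (by positivity), ← Real.rpow_natCast]; norm_num
    rw [mul_pow, mul_pow, hp, inv_pow, inv_mul_eq_div, div_mul_eq_mul_div, le_div_iff₀ (by positivity)]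
    have hpoly : 1 + l + l^2 ≤ (1 + m^2)^3 := by
      rw [← hm3]
      nlinarith [mul_nonneg (sq_nonneg m) (sq_nonneg (m - 1)), sq_nonneg m, sq_nonneg (m^2), hm0]
    have hq1 : (N^2 + G^2 + H) * l^2 ≤ (1 + l + l^2) * D^2 := by
      have c1 := mul_le_mul_of_nonneg_left g2 hl.le
      have c2 := mul_le_mul_of_nonneg_left h4 (sq_nonneg l)
      nlinarith
    exact hq1.trans (mul_le_mul_of_nonneg_right hpoly (sq_nonneg D))
  refine hC.trans ?_
  calc _ ≤ l⁻¹ * (1 + l ^ ((2:ℝ)/3)) ^ ((3:ℝ)/2) * ((1 + (k + e * s) / (θ * l - μ)) * F / θ) :=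
        mul_le_mul_of_nonneg_left gD (by positivity)
    _ = _ := by ring

/-- Lemma `C_H0`: bound for the elliptic regularity constant C_H when
ε is scalar: for every u ∈ H²(Ω) ∩ H¹₀(Ω) and every representative Lu of L u,
  ‖u‖_{H²} ≤ (λ₁^{-1}⟨λ₁^{1/3}⟩³/θ)·(1 + (‖κ²‖_∞ + √d·max_i‖∂_i ε‖_∞·λ₁^{1/2})/(θλ₁-μ))
      · ‖L u‖_{L²}. -/
theorem npbe_CH_bound_scalar
    (d : ℕ) (Ω : Set (Euc d)) (hΩo : IsOpen Ω) (hΩb : Bornology.IsBounded Ω)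
    (hΩc : Convex ℝ Ω) (hΩs : HasSmoothBoundary Ω)
    (ε : Euc d → ℂ) (θ : ℝ) (hθ : 0 < θ)
    (hεdiff : ∀ x ∈ Ω, DifferentiableAt ℝ ε x)
    (hεlb : ∀ x ∈ Ω, θ ≤ (ε x).re)
    (Emax : ℝ) (hEmax : ∀ x ∈ Ω, ∀ i : Fin d, ‖pd i ε x‖ ≤ Emax)
    (hεK : ∃ K : ℝ≥0, LipschitzOnWith K ε Ω ∧ ∀ x ∈ Ω, ‖ε x‖ ≤ (K : ℝ))
    (κ2 : Euc d → ℂ) (hκL : MemLp κ2 ⊤ (volume.restrict Ω))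
    (μ : ℝ) (hμ : 0 ≤ μ) (hκ : ∀ᵐ x ∂(volume.restrict Ω), -μ ≤ (κ2 x).re)
    (hspec : μ / θ < lambda1 Ω)
    (U : SobFun d Ω 2) (hU0 : MemH10 Ω U.u) (Lu : Euc d → ℂ)
    (hLu : IsLu Ω (fun x => Matrix.diagonal (fun _ => ε x)) κ2 U Lu) :
    SobNormInt U ≤
      ((lambda1 Ω)⁻¹ * (1 + lambda1 Ω ^ ((2:ℝ)/3)) ^ ((3:ℝ)/2) / θ)
        * (1 + (LinfN Ω κ2 + Real.sqrt d * Emax * Real.sqrt (lambda1 Ω))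
            / (θ * lambda1 Ω - μ))
        * L2N Ω Lu := by
  obtain ⟨K, hKL, hKb⟩ := hεK
  have hl : 0 < lambda1 Ω := lt_of_le_of_lt (by positivity) hspec
  have hne : Ω.Nonempty := by
    by_contra hn
    rw [Set.not_nonempty_iff_eq_empty] at hn
    refine absurd hl (not_lt.2 (Real.sInf_nonpos ?_))
    rintro r ⟨φ, hφ, h0, -⟩
    exact absurd (funext fun x => test_zero_off hφ (by simp [hn])) h0
  have hΩ : Dom Ω := ⟨hΩo, hΩb, hΩc, hne⟩
  have hE : 0 ≤ Emax := by
    obtain ⟨x, hx⟩ := hne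
    rcases Nat.eq_zero_or_pos d with h0 | hd
    · subst h0
      refine absurd hl (not_lt.2 (Real.sInf_nonpos ?_))
      rintro r ⟨φ, hφ, -, rfl⟩
      have : ∀ x, fderiv ℝ φ x = 0 := fun x => by
        ext v
        rw [Subsingleton.elim v 0]; simp
      simp [this]
    · exact (norm_nonneg _).trans (hEmax x hx ⟨0, hd⟩)
  have hεD : EpsD Ω ε K Emax := ⟨hεdiff, hKb, hEmax⟩
  have hu : H10f Ω U.u U.d1 := memH10_H10f hΩ U.h1 hU0
  have hk0 : 0 ≤ LinfN Ω κ2 := ENNReal.toReal_nonneg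
  have hq : 0 < θ * lambda1 Ω - μ := by
    have := hspec
    rw [div_lt_iff₀ hθ] at this; linarith
  have hkae : ∀ᵐ x ∂(volume.restrict Ω), ‖κ2 x‖ ≤ LinfN Ω κ2 := by
    have h1 := ae_le_eLpNormEssSup (f := κ2) (μ := volume.restrict Ω)
    filter_upwards [h1] with x hx
    rw [← eLpNorm_exponent_top] at hx
    have := ENNReal.toReal_mono hκL.2.ne hx
    simpa [LinfN] using this
  have hκu : MemL2 Ω (fun x => κ2 x * U.u x) := hu.m.bdd_mul' hκL.1 hkae
  obtain ⟨g, hg, hLg⟩ := hLu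
  have hdiag : ∀ i, (fun x => ∑ j, Matrix.diagonal (fun _ => ε x) i j * U.d1 j x)
      = fun x => ε x * U.d1 i x := by
    intro i; funext x
    rw [Finset.sum_eq_single i]
    · simp
    · intro j _ hj
      rw [Matrix.diagonal_apply_ne _ (Ne.symm hj), zero_mul]
    · simp
  simp only [hdiag] at hg
  have hb : ∀ i, MemL2 Ω (U.d2 i i) := fun i => (U.h2 i).m' i
  have hwb : ∀ i, IsWeakDeriv Ω i (U.d1 i) (U.d2 i i) := fun i => (U.h2 i).w i
  have hvm : ∀ i, MemL2 Ω (fun x => pd i ε x * U.d1 i x + ε x * U.d2 i i x) := fun i =>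
    (hεD.mulp hΩo (hu.m' i) i).add' (hεD.mulm hΩo (hb i))
  have hvw : ∀ i, IsWeakDeriv Ω i (fun x => ε x * U.d1 i x)
      (fun x => pd i ε x * U.d1 i x + ε x * U.d2 i i x) := fun i =>
    hεD.wd hΩ (hu.m' i) (hb i) (hwb i)
  by_cases hbad : ∃ i : Fin d, ∀ φ, IsTestFun Ω φ → ∫ x in Ω, (ε x * U.d1 i x) * pd i φ x = 0
  · obtain ⟨i, hT⟩ := hbad
    have u0 := bad_zero hΩ hθ hεD hεlb hu hT
    have a0 : ∀ j, ∀ᵐ x ∂(volume.restrict Ω), U.d1 j x = 0 := fun j =>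
      wd_of_zero hΩo (hu.m' j) (U.h1.w j) u0
    have b0 : ∀ i j, ∀ᵐ x ∂(volume.restrict Ω), U.d2 i j x = 0 := fun i j =>
      wd_of_zero hΩo ((U.h2 j).m' i) ((U.h2 j).w i) (a0 j)
    have hS : SobNormInt U = 0 := by
      rw [sobNorm_sq, L2N_zero u0]
      simp only [fun j => L2N_zero (a0 j), fun i j => L2N_zero (b0 i j)]
      simp
    rw [hS]
    have := L2N_nonneg Ω Lu
    positivity
  · have hgood : ∀ i, ∀ᵐ x ∂(volume.restrict Ω),
        g i x = pd i ε x * U.d1 i x + ε x * U.d2 i i x := by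
      intro i
      rcases good_eq hΩo (hεD.mulm hΩo (hu.m' i)) (hvm i) (hvw i) (hg i) with h | h
      · exact absurd ⟨i, h⟩ hbad
      · exact h
    have hLF : L2N Ω Lu = L2N Ω (fun x =>
        -(∑ i, (pd i ε x * U.d1 i x + ε x * U.d2 i i x)) + κ2 x * U.u x) := by
      unfold L2N
      refine congrArg ENNReal.toReal (eLpNorm_congr_ae ?_)
      filter_upwards [hLg, ae_all_iff.2 hgood] with x h1 h2
      rw [h1, Finset.sum_congr rfl fun i _ => h2 i]
    obtain ⟨η, e1, e2, e3, e4, e5⟩ := exists_eta hΩ hΩs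
    have hH := hess_bound hΩ e1 e2 e3 e4 e5 hu U.h2
    have hP := hu.poincare hΩ
    have hc := coer hΩ hεD hεlb hκL hκ hu hvm hvw hκu
    have hgl := grad_lap hΩ hu hb hwb
    have hlap := lap_bd hΩ hθ hεD hE hεlb hk0 hkae hu.m hu.m' hb hκu
    have hsum : 0 ≤ ∑ i, (L2N Ω (U.d1 i))^2 := Finset.sum_nonneg fun i _ => sq_nonneg _
    have hG : Real.sqrt (∑ i, (L2N Ω (U.d1 i))^2) ^ 2 = ∑ i, (L2N Ω (U.d1 i))^2 :=
      Real.sq_sqrt hsum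
    rw [← hLF] at hc hlap
    rw [sobNorm_sq, ← hG]
    rw [← hG] at hP hc hgl
    exact real_est hl hθ hμ hspec (L2N_nonneg _ _) (Real.sqrt_nonneg _) (L2N_nonneg _ _)
      (L2N_nonneg _ _) hk0 (by positivity) hc hP hgl hlap hH
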